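/- Let n ≥ 1, p, q, r ≥ 1, α > −1 and δ > 0. Let {a_k} be a separated sequence in 𝔹ₙ, let μ be a positive Borel measure on 𝔹ₙ, and assume that the Carleson embedding J_μ : A^p_α → L^q(dμ) is r-summing. Set β_k = (1−|a_k|²)^{−(n+1+α)/p} μ(B(a_k,δ))^{1/q}, and let κ = 2p/(2p−2q+pq) for 1 ≤ p ≤ 2 and 1 ≤ q ≤ 2, with the convention κ = ∞ when (p,q) = (1,2). Then, with a constant C depending only on n, p, q, r, α, δ and the separation constant of {a_k}: (1) if 1 ≤ p, q ≤ 2, then ‖{β_k}‖_{ℓ^{κq}} ≤ C·π_r(J_μ) (ℓ^∞ when κ = ∞); (2) if p > 1, q ≥ 1 and 1 ≤ r ≤ p' = p/(p−1), then ‖{β_k}‖_{ℓ^{p'}} ≤ C·π_r(J_μ); (3) if p > 1, q ≥ 1 and p' ≤ r < ∞, then ‖{β_k}‖_{ℓ^r} ≤ C·π_r(J_μ); (4) if p ≥ 2 and q ≥ 2, then ‖{β_k}‖_{ℓ^q} ≤ C·π_r(J_μ). -/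

import Mathlib

open MeasureTheory Metric Filter Complex
open scoped ENNReal NNReal BigOperators ComplexConjugate

noncomputable section

/-- `ℂⁿ` with the Euclidean norm. -/
abbrev En (n : ℕ) := EuclideanSpace ℂ (Fin n)

instance (n : ℕ) : InnerProductSpace ℝ (En n) := InnerProductSpace.complexToReal
instance (n : ℕ) : MeasurableSpace (En n) := borel _
instance (n : ℕ) : BorelSpace (En n) := ⟨rfl⟩
instance (n : ℕ) : FiniteDimensional ℝ (En n) := Module.Finite.trans ℂ (En n)

/-- The open unit ball `𝔹ₙ`. -/
def unitBall (n : ℕ) : Set (En n) := Metric.ball 0 1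

/-- The Hermitian pairing `⟨z,w⟩ = ∑ zⱼ conj wⱼ`. -/
def herm {n : ℕ} (z w : En n) : ℂ := ∑ j, z j * conj (w j)

/-- Normalized Lebesgue volume measure on `𝔹ₙ` (total mass 1). -/
def vMeas (n : ℕ) : Measure (En n) :=
  (volume (Metric.ball (0 : En n) 1))⁻¹ • volume.restrict (Metric.ball 0 1)

/-- The normalizing constant `c_α = Γ(n+1+α)/(n!·Γ(α+1))`. -/
def volConst (n : ℕ) (α : ℝ) : ℝ :=
  Real.Gamma (n + 1 + α) / ((n.factorial : ℝ) * Real.Gamma (α + 1))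

/-- The weighted measure `dv_α = c_α (1-|z|²)^α dv`. -/
def wMeas (n : ℕ) (α : ℝ) : Measure (En n) :=
  (vMeas n).withDensity fun z => ENNReal.ofReal (volConst n α * (1 - ‖z‖ ^ 2) ^ α)

-- The Möbius involution `φ_z` of `𝔹ₙ` interchanging `z` and `0`, evaluated at `w`.
open scoped Classical in
def mobius {n : ℕ} (z w : En n) : En n :=
  if z = 0 then -w
  else
    (1 - herm w z)⁻¹ •
      (z - (herm w z / herm z z) • z -
        ((Real.sqrt (1 - ‖z‖ ^ 2) : ℝ) : ℂ) • (w - (herm w z / herm z z) • z))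

/-- The Bergman metric on `𝔹ₙ`. -/
def bergmanDist {n : ℕ} (z w : En n) : ℝ :=
  (1 / 2) * Real.log ((1 + ‖mobius z w‖) / (1 - ‖mobius z w‖))

/-- The Bergman metric ball `B(z,r)`. -/
def bergmanBall {n : ℕ} (z : En n) (r : ℝ) : Set (En n) :=
  {w | w ∈ unitBall n ∧ bergmanDist z w < r}

/-- The Möbius invariant measure `dλ(z) = (1-|z|²)^{-(n+1)} dv(z)`. -/
def invMeas (n : ℕ) : Measure (En n) :=
  (vMeas n).withDensity fun z => ENNReal.ofReal ((1 - ‖z‖ ^ 2) ^ (-(n + 1 : ℝ)))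

/-- A sequence in `𝔹ₙ` which is separated (with separation constant `ε`)
in the Bergman metric. -/
def IsSeparated {n : ℕ} (a : ℕ → En n) (ε : ℝ) : Prop :=
  (∀ k, a k ∈ unitBall n) ∧ ∀ i j, i ≠ j → ε ≤ bergmanDist (a i) (a j)

/-- A `δ`-lattice in the Bergman metric. -/
def IsLattice {n : ℕ} (a : ℕ → En n) (δ : ℝ) : Prop :=
  (∀ k, a k ∈ unitBall n) ∧
    (∀ z ∈ unitBall n, ∃ k, z ∈ bergmanBall (a k) δ) ∧
      ∀ i j, i ≠ j → Disjoint (bergmanBall (a i) (δ / 4)) (bergmanBall (a j) (δ / 4))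

/-- `T` satisfies the `(r,s)`-summing inequality with constant `C`. -/
def SummingBoundWith (r s : ℝ) {X Y : Type*} [NormedAddCommGroup X] [NormedSpace ℂ X]
    [NormedAddCommGroup Y] (T : X → Y) (C : ℝ) : Prop :=
  ∀ (m : ℕ) (x : Fin m → X),
    (∑ k, ‖T (x k)‖ ^ r) ^ (1 / r) ≤
      C * ⨆ φ : {φ : X →L[ℂ] ℂ // ‖φ‖ ≤ 1}, (∑ k, ‖φ.1 (x k)‖ ^ s) ^ (1 / s)

/-- `T` is `(r,s)`-summing. -/
def IsSummingRS (r s : ℝ) {X Y : Type*} [NormedAddCommGroup X] [NormedSpace ℂ X]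
    [NormedAddCommGroup Y] (T : X → Y) : Prop :=
  ∃ C, 0 ≤ C ∧ SummingBoundWith r s T C

/-- The `(r,s)`-summing norm `π_{r,s}(T)`. -/
def summingNorm (r s : ℝ) {X Y : Type*} [NormedAddCommGroup X] [NormedSpace ℂ X]
    [NormedAddCommGroup Y] (T : X → Y) : ℝ :=
  sInf {C | 0 ≤ C ∧ SummingBoundWith r s T C}

/-- The subspace of `Lp` consisting of (a.e. classes of) functions having a representative
holomorphic on `Ω`. -/
def holoSubmodule (n : ℕ) (p : ℝ≥0∞) [Fact (1 ≤ p)] (Ω : Set (En n)) (μ : Measure (En n)) :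
    Submodule ℂ (Lp ℂ p μ) where
  carrier := {f | ∃ g : En n → ℂ, DifferentiableOn ℂ g Ω ∧ (f : En n → ℂ) =ᵐ[μ] g}
  zero_mem' := ⟨fun _ => 0, differentiableOn_const 0, Lp.coeFn_zero ℂ p μ⟩
  add_mem' := by
    rintro f f' ⟨g, hg, hfg⟩ ⟨g', hg', hfg'⟩
    exact ⟨g + g', hg.add hg', (Lp.coeFn_add f f').trans (hfg.add hfg')⟩
  smul_mem' := by
    rintro c f ⟨g, hg, hfg⟩
    exact ⟨c • g, hg.const_smul c, (Lp.coeFn_smul c f).trans (hfg.const_smul c)⟩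

/-- The weighted Bergman space `A^p_α` as a subspace of `L^p(dv_α)`. -/
abbrev BergmanSpace (n : ℕ) (p α : ℝ) [Fact (1 ≤ ENNReal.ofReal p)] :=
  ↥(holoSubmodule n (ENNReal.ofReal p) (unitBall n) (wMeas n α))

/-- The kernel `H_{p,z}(w) = (1-⟨z,w⟩)^{-b}`. -/
def Hker {n : ℕ} (b : ℝ) (z : En n) : En n → ℂ := fun w => (1 - herm z w) ^ (-(b : ℂ))

/-- The `L^p(dv_α)` norm of a function. -/
def lpNormOn (n : ℕ) (p α : ℝ) (g : En n → ℂ) : ℝ :=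
  (∫ w, ‖g w‖ ^ p ∂wMeas n α) ^ (1 / p)

/-- The normalized test function `h_{p,z} = H_{p,z}/‖H_{p,z}‖_{p,α}`
(with kernel exponent `b`). -/
def hTest (n : ℕ) (p α b : ℝ) (z : En n) : En n → ℂ := fun w =>
  Hker b z w / ((lpNormOn n p α (Hker b z) : ℝ) : ℂ)

/-- The `ℓ^s` norm of a sequence of reals, valued in `ℝ≥0∞`. -/
def ellNormE (s : ℝ) (b : ℕ → ℝ) : ℝ≥0∞ := (∑' k, ENNReal.ofReal (b k) ^ s) ^ (1 / s)

/-- The `ℓ^s` norm of a sequence of extended reals. -/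
def ellNormE' (s : ℝ) (b : ℕ → ℝ≥0∞) : ℝ≥0∞ := (∑' k, b k ^ s) ^ (1 / s)

/-- The `L^s(𝔹ₙ,dλ)` norm of a nonnegative function, valued in `ℝ≥0∞`. -/
def lamNormE (n : ℕ) (s : ℝ) (g : En n → ℝ) : ℝ≥0∞ :=
  (∫⁻ z, ENNReal.ofReal (g z) ^ s ∂invMeas n) ^ (1 / s)

/-- The Bergman projection `P_β`. -/
def bergmanProj (n : ℕ) (β : ℝ) (f : En n → ℂ) (z : En n) : ℂ :=
  ∫ w, f w * (1 - herm z w) ^ (-((n : ℂ) + 1 + (β : ℂ))) ∂wMeas n β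

/-- The conjugate Bergman projection. -/
def conjBergmanProj (n : ℕ) (β : ℝ) (f : En n → ℂ) (z : En n) : ℂ :=
  ∫ w, f w * (1 - herm w z) ^ (-((n : ℂ) + 1 + (β : ℂ))) ∂wMeas n β

/-- `g` is bounded and holomorphic on `𝔹ₙ`. -/
def BoundedHolo (n : ℕ) (g : En n → ℂ) : Prop :=
  DifferentiableOn ℂ g (unitBall n) ∧ ∃ M, ∀ z ∈ unitBall n, ‖g z‖ ≤ M

/-- The big Hankel operator `H^β_f(g) = f g - P_β(f g)` at the level of functions. -/
def hankelFun (n : ℕ) (β : ℝ) (f g : En n → ℂ) : En n → ℂ := fun z =>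
  f z * g z - bergmanProj n β (fun w => f w * g w) z

/-- The little Hankel operator `h^β_f(g) = conj-P_β(f g)` at the level of functions. -/
def littleHankelFun (n : ℕ) (β : ℝ) (f g : En n → ℂ) : En n → ℂ :=
  conjBergmanProj n β fun w => f w * g w

/-- `T : A^p_α → L^q(dv_β)` extends the big Hankel operator `H^β_f` from the
bounded holomorphic functions. -/
def ExtendsBigHankel (n : ℕ) (p q α β : ℝ) [Fact (1 ≤ ENNReal.ofReal p)]
    [Fact (1 ≤ ENNReal.ofReal q)] (f : En n → ℂ)
    (T : BergmanSpace n p α → Lp ℂ (ENNReal.ofReal q) (wMeas n β)) : Prop :=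
  ∀ g : En n → ℂ, BoundedHolo n g →
    ∀ G : BergmanSpace n p α,
      ((G : Lp ℂ (ENNReal.ofReal p) (wMeas n α)) : En n → ℂ) =ᵐ[wMeas n α] g →
        (T G : En n → ℂ) =ᵐ[wMeas n β] hankelFun n β f g

/-- `T : A^p_α → L^q(dv_β)` extends the little Hankel operator `h^β_f` from the
bounded holomorphic functions. -/
def ExtendsLittleHankel (n : ℕ) (p q α β : ℝ) [Fact (1 ≤ ENNReal.ofReal p)]
    [Fact (1 ≤ ENNReal.ofReal q)] (f : En n → ℂ)
    (T : BergmanSpace n p α → Lp ℂ (ENNReal.ofReal q) (wMeas n β)) : Prop :=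
  ∀ g : En n → ℂ, BoundedHolo n g →
    ∀ G : BergmanSpace n p α,
      ((G : Lp ℂ (ENNReal.ofReal p) (wMeas n α)) : En n → ℂ) =ᵐ[wMeas n α] g →
        (T G : En n → ℂ) =ᵐ[wMeas n β] littleHankelFun n β f g

/-- `J : A^p_α → L^q(dμ)` represents the Carleson embedding `J_μ f = f`. -/
def RepresentsEmbedding (n : ℕ) (p q α : ℝ) [Fact (1 ≤ ENNReal.ofReal p)]
    [Fact (1 ≤ ENNReal.ofReal q)] (μ : Measure (En n))
    (J : BergmanSpace n p α → Lp ℂ (ENNReal.ofReal q) μ) : Prop :=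
  ∀ (G : BergmanSpace n p α) (g : En n → ℂ), DifferentiableOn ℂ g (unitBall n) →
    ((G : Lp ℂ (ENNReal.ofReal p) (wMeas n α)) : En n → ℂ) =ᵐ[wMeas n α] g →
      (J G : En n → ℂ) =ᵐ[μ] g

/-- The IDA function `G_{q,δ}(f)(z)`. -/
def Gq (n : ℕ) (q δ : ℝ) (f : En n → ℂ) (z : En n) : ℝ :=
  ⨅ h : {h : En n → ℂ // DifferentiableOn ℂ h (bergmanBall z δ)},
    ((vMeas n (bergmanBall z δ)).toReal⁻¹ *
        ∫ w in bergmanBall z δ, ‖f w - h.1 w‖ ^ q ∂vMeas n) ^ (1 / q)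

/-- The average of `f` over the Bergman ball `B(z,δ)`. -/
def ballAvg (n : ℕ) (δ : ℝ) (f : En n → ℂ) (z : En n) : ℂ :=
  ((vMeas n (bergmanBall z δ)).toReal⁻¹ : ℝ) • ∫ w in bergmanBall z δ, f w ∂vMeas n

/-- The local mean oscillation `MO_{q,δ}(f)(z)`. -/
def MOq (n : ℕ) (q δ : ℝ) (f : En n → ℂ) (z : En n) : ℝ :=
  ((vMeas n (bergmanBall z δ)).toReal⁻¹ *
      ∫ w in bergmanBall z δ, ‖f w - ballAvg n δ f z‖ ^ q ∂vMeas n) ^ (1 / q)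

/-- The integral operator `V_{b,β}`. -/
def Vop (n : ℕ) (b β : ℝ) (f : En n → ℂ) (z : En n) : ℂ :=
  ((volConst n (b + β) / volConst n β : ℝ) : ℂ) * (((1 - ‖z‖ ^ 2) ^ b : ℝ) : ℂ) *
    ∫ w, f w * (1 - herm z w) ^ (-((n : ℂ) + 1 + (β : ℂ) + (b : ℂ))) ∂wMeas n β

/-- The norm of the invariant gradient `|∇̃f(z)| = |∇(f ∘ φ_z)(0)|`. -/
def invGradNorm (n : ℕ) (f : En n → ℂ) (z : En n) : ℝ :=
  ‖fderiv ℂ (fun w => f (mobius z w)) 0‖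

/-- The Besov space norm `‖f‖_{B^γ_s}`, valued in `ℝ≥0∞`. -/
def besovNorm (n : ℕ) (s γ : ℝ) (f : En n → ℂ) : ℝ≥0∞ :=
  (∫⁻ z, ENNReal.ofReal ((1 - ‖z‖ ^ 2) ^ γ * invGradNorm n f z) ^ s ∂invMeas n) ^ (1 / s)


/-- The lattice quantity `β_k = (1-|a_k|²)^{-(n+1+α)/p}·μ(B(a_k,δ))^{1/q}`. -/
def carlesonBeta (n : ℕ) (p q α δ : ℝ) (μ : Measure (En n)) (a : ℕ → En n) (k : ℕ) :
    ℝ≥0∞ :=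
  ENNReal.ofReal ((1 - ‖a k‖ ^ 2) ^ (-(((n : ℝ) + 1 + α) / p))) *
    μ (bergmanBall (a k) δ) ^ ((1 : ℝ) / q)

/-!
For `b` large, the functions `h_k = (1 - |a_k|²)^{b-θ} / (1 - ⟨z, a_k⟩)^b`, `θ = (n+1+α)/p`,
satisfy `‖∑ c_k h_k‖ ≲ ‖c‖_{ℓ^p}` by Schur's test and the Forelli–Rudin estimates, for a
separated sequence, so by duality `(φ(h_k))_k` lies in `ℓ^{p'}` uniformly over the dual unit ball.
On `B(a_k, δ)` one has `|h_k| ≳ (1 - |a_k|²)^{-θ}`, hence `β_k ≲ ‖J h_k‖`, and the summing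
inequality for the exponent `max (r, p')` gives (2) and (3).

For (1) and (4), take a family `(l_k h_k)` with weak `ℓ²` norm at most `1`. Khinchine's inequality,
applied once in the scalars and once in `L^q(μ)`, turns `r`-summability into
`‖(∑ |l_k J h_k|²)^{1/2}‖_{L^q(μ)} ≲ π_r(J)`. As the balls `B(a_k, δ)` have bounded overlap, the
left-hand side dominates `(∑ (l_k β_k)^q)^{1/q}`. By the first step the admissible weights `l` are
those bounded in `ℓ^∞` if `p ≥ 2`, and in `ℓ^{2p/(2-p)}` if `p < 2`; optimizing over them, Hölder
duality yields `ℓ^q` in the first case and `ℓ^{κq}` in the second.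
-/

open scoped InnerProductSpace

section Geometry

lemma one_sub_norm_sq_pos {E : Type*} [SeminormedAddGroup E] {z : E} (hz : ‖z‖ < 1) :
    0 < 1 - ‖z‖ ^ 2 := by
  nlinarith [norm_nonneg z]

section UnitBall

variable {E : Type*} [NormedAddCommGroup E] [InnerProductSpace ℂ E] {z w : E}

lemma inner_self_eq_ofReal_norm_sq (z : E) : ⟪z, z⟫_ℂ = ((‖z‖ ^ 2 : ℝ) : ℂ) := by
  rw [inner_self_eq_norm_sq_to_K]
  push_cast
  rfl

lemma norm_one_sub_inner_self (hz : ‖z‖ ≤ 1) : ‖1 - ⟪z, z⟫_ℂ‖ = 1 - ‖z‖ ^ 2 := by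
  have h : 0 ≤ 1 - ‖z‖ ^ 2 := sub_nonneg.mpr (pow_le_one₀ (norm_nonneg z) hz)
  rw [inner_self_eq_ofReal_norm_sq, ← Complex.ofReal_one, ← Complex.ofReal_sub, Complex.norm_real,
    Real.norm_of_nonneg h]

lemma one_sub_norm_le_norm_one_sub_inner (hw : ‖w‖ ≤ 1) : 1 - ‖z‖ ≤ ‖1 - ⟪w, z⟫_ℂ‖ := by
  have h : ‖⟪w, z⟫_ℂ‖ ≤ ‖w‖ * ‖z‖ := norm_inner_le_norm w z
  have h' := norm_sub_norm_le (1 : ℂ) ⟪w, z⟫_ℂ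
  rw [norm_one] at h'
  nlinarith [norm_nonneg z]

lemma one_sub_inner_ne_zero (hw : ‖w‖ < 1) (hz : ‖z‖ < 1) : 1 - ⟪w, z⟫_ℂ ≠ 0 := by
  have := one_sub_norm_le_norm_one_sub_inner (z := z) hw.le
  exact norm_pos_iff.mp (by linarith)

lemma norm_one_sub_inner_comm (z w : E) : ‖1 - ⟪z, w⟫_ℂ‖ = ‖1 - ⟪w, z⟫_ℂ‖ := by
  rw [← RCLike.norm_conj, map_sub, map_one, inner_conj_symm]

lemma norm_one_sub_sq (c : ℂ) : ‖1 - c‖ ^ 2 = 1 - 2 * c.re + ‖c‖ ^ 2 := by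
  rw [← Complex.normSq_eq_norm_sq, ← Complex.normSq_eq_norm_sq, Complex.normSq_sub,
    Complex.normSq_one, one_mul, Complex.conj_re]
  ring

lemma inner_sub_smul_inner_div_eq_zero (hz : z ≠ 0) :
    ⟪z, w - (⟪z, w⟫_ℂ / ((‖z‖ ^ 2 : ℝ) : ℂ)) • z⟫_ℂ = 0 := by
  have hz' : ((‖z‖ ^ 2 : ℝ) : ℂ) ≠ 0 := by simpa using hz
  rw [inner_sub_right, inner_smul_right, inner_self_eq_ofReal_norm_sq, div_mul_cancel₀ _ hz',
    sub_self]

lemma norm_sub_smul_inner_div_sq (hz : z ≠ 0) :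
    ‖w - (⟪z, w⟫_ℂ / ((‖z‖ ^ 2 : ℝ) : ℂ)) • z‖ ^ 2 = ‖w‖ ^ 2 - ‖⟪z, w⟫_ℂ‖ ^ 2 / ‖z‖ ^ 2 := by
  set c := ⟪z, w⟫_ℂ / ((‖z‖ ^ 2 : ℝ) : ℂ) with hc
  have hpyth := norm_add_sq_eq_norm_sq_add_norm_sq_of_inner_eq_zero (𝕜 := ℂ) (c • z) (w - c • z)
    (by rw [inner_smul_left, inner_sub_smul_inner_div_eq_zero hz, mul_zero])
  have hcn : ‖c‖ = ‖⟪z, w⟫_ℂ‖ / ‖z‖ ^ 2 := by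
    rw [hc, norm_div, Complex.norm_real, Real.norm_of_nonneg (by positivity)]
  have hz' := norm_ne_zero_iff.mpr hz
  rw [add_sub_cancel, norm_smul, hcn] at hpyth
  field_simp at hpyth ⊢
  linarith

lemma norm_sub_smul_sub_sqrt_smul_sq (hz : z ≠ 0) (hz1 : ‖z‖ ≤ 1) :
    ‖z - (⟪z, w⟫_ℂ / ((‖z‖ ^ 2 : ℝ) : ℂ)) • z -
        (√(1 - ‖z‖ ^ 2) : ℂ) • (w - (⟪z, w⟫_ℂ / ((‖z‖ ^ 2 : ℝ) : ℂ)) • z)‖ ^ 2 =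
      ‖1 - ⟪z, w⟫_ℂ‖ ^ 2 - (1 - ‖z‖ ^ 2) * (1 - ‖w‖ ^ 2) := by
  have horth := inner_sub_smul_inner_div_eq_zero (w := w) hz
  have hperp := norm_sub_smul_inner_div_sq (w := w) hz
  set c := ⟪z, w⟫_ℂ / ((‖z‖ ^ 2 : ℝ) : ℂ) with hc
  set v := w - c • z
  have hpyth : ‖(1 - c) • z - (√(1 - ‖z‖ ^ 2) : ℂ) • v‖ ^ 2 =
      ‖1 - c‖ ^ 2 * ‖z‖ ^ 2 + (1 - ‖z‖ ^ 2) * ‖v‖ ^ 2 := by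
    have h := norm_add_sq_eq_norm_sq_add_norm_sq_of_inner_eq_zero (𝕜 := ℂ) ((1 - c) • z)
      (-((√(1 - ‖z‖ ^ 2) : ℂ) • v))
      (by rw [inner_neg_right, inner_smul_right, inner_smul_left, horth, mul_zero, mul_zero,
        neg_zero])
    rw [← sub_eq_add_neg, norm_neg, ← sq, ← sq, ← sq, norm_smul, norm_smul, Complex.norm_real,
      Real.norm_of_nonneg (Real.sqrt_nonneg _), mul_pow, mul_pow,
      Real.sq_sqrt (by nlinarith [norm_nonneg z])] at h
    exact h
  have hcn : ‖c‖ ^ 2 = ‖⟪z, w⟫_ℂ‖ ^ 2 / ‖z‖ ^ 4 := by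
    rw [hc, norm_div, Complex.norm_real, Real.norm_of_nonneg (by positivity)]
    field_simp
  have hcre : c.re = (⟪z, w⟫_ℂ).re / ‖z‖ ^ 2 := by rw [hc, Complex.div_ofReal_re]
  have hz' := norm_ne_zero_iff.mpr hz
  have hsplit : z - c • z = (1 - c) • z := by rw [sub_smul, one_smul]
  rw [hsplit, hpyth, hperp, norm_one_sub_sq, norm_one_sub_sq, hcn, hcre]
  field_simp
  ring

/-- The hyperbolic cosine of the Bergman distance on the unit ball (`cosh_bergmanDist`), as an
explicit function on any complex inner product space. -/
def bergmanCosh (z w : E) : ℝ := ‖1 - ⟪z, w⟫_ℂ‖ / (√(1 - ‖z‖ ^ 2) * √(1 - ‖w‖ ^ 2))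

lemma bergmanCosh_comm (z w : E) : bergmanCosh z w = bergmanCosh w z := by
  rw [bergmanCosh, bergmanCosh, norm_one_sub_inner_comm, mul_comm √(1 - ‖z‖ ^ 2)]

lemma bergmanCosh_nonneg (z w : E) : 0 ≤ bergmanCosh z w := by
  unfold bergmanCosh
  positivity

lemma bergmanCosh_sq (hz : ‖z‖ < 1) (hw : ‖w‖ < 1) :
    bergmanCosh z w ^ 2 = ‖1 - ⟪z, w⟫_ℂ‖ ^ 2 / ((1 - ‖z‖ ^ 2) * (1 - ‖w‖ ^ 2)) := by
  rw [bergmanCosh, div_pow, mul_pow, Real.sq_sqrt (one_sub_norm_sq_pos hz).le,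
    Real.sq_sqrt (one_sub_norm_sq_pos hw).le]

/-- The embedding `u ↦ (u - z, ⟪z, u - z⟫ / √(1 - ‖z‖²))`, whose Gram matrix is the defect in the
reverse Cauchy–Schwarz inequality for the Lorentz form `1 - ⟪u, v⟫` (`inner_lorentzLift`). -/
def lorentzLift (z u : E) : WithLp 2 (E × ℂ) :=
  WithLp.toLp 2 (u - z, ⟪z, u - z⟫_ℂ / √(1 - ‖z‖ ^ 2))

lemma inner_lorentzLift (hz : ‖z‖ < 1) (x y : E) :
    ⟪lorentzLift z x, lorentzLift z y⟫_ℂ =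
      (1 - ⟪x, z⟫_ℂ) * (1 - ⟪z, y⟫_ℂ) / ((1 - ‖z‖ ^ 2 : ℝ) : ℂ) - (1 - ⟪x, y⟫_ℂ) := by
  have hρ := one_sub_norm_sq_pos hz
  have hρ' : ((1 - ‖z‖ ^ 2 : ℝ) : ℂ) ≠ 0 := by exact_mod_cast hρ.ne'
  have hsqrt : ((√(1 - ‖z‖ ^ 2) : ℝ) : ℂ) * √(1 - ‖z‖ ^ 2) = ((1 - ‖z‖ ^ 2 : ℝ) : ℂ) := by
    rw [← Complex.ofReal_mul, Real.mul_self_sqrt hρ.le]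
  have hzz : ⟪z, z⟫_ℂ = 1 - ((1 - ‖z‖ ^ 2 : ℝ) : ℂ) := by
    rw [inner_self_eq_ofReal_norm_sq, ← Complex.ofReal_one, ← Complex.ofReal_sub, sub_sub_cancel]
  rw [lorentzLift, lorentzLift, WithLp.prod_inner_apply, RCLike.inner_apply, map_div₀,
    Complex.conj_ofReal, inner_conj_symm, div_mul_div_comm, hsqrt]
  simp only [inner_sub_left, inner_sub_right, hzz]
  field_simp
  ring

lemma norm_lorentzLift_sq (hz : ‖z‖ < 1) (x : E) :
    ‖lorentzLift z x‖ ^ 2 = ‖1 - ⟪x, z⟫_ℂ‖ ^ 2 / (1 - ‖z‖ ^ 2) - (1 - ‖x‖ ^ 2) := by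
  have h := inner_lorentzLift hz x x
  have hconj : (1 - ⟪x, z⟫_ℂ) * (1 - ⟪z, x⟫_ℂ) = ((‖1 - ⟪x, z⟫_ℂ‖ ^ 2 : ℝ) : ℂ) := by
    rw [← inner_conj_symm z x, ← map_one (starRingEnd ℂ), ← map_sub, map_one, Complex.mul_conj']
    norm_cast
  rw [hconj, inner_self_eq_ofReal_norm_sq, inner_self_eq_ofReal_norm_sq] at h
  exact_mod_cast h

lemma norm_one_sub_inner_le (hz : ‖z‖ < 1) (x y : E) :
    ‖1 - ⟪x, y⟫_ℂ‖ ≤ ‖1 - ⟪x, z⟫_ℂ‖ * ‖1 - ⟪z, y⟫_ℂ‖ / (1 - ‖z‖ ^ 2) +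
      ‖lorentzLift z x‖ * ‖lorentzLift z y‖ := by
  have hsplit : 1 - ⟪x, y⟫_ℂ = (1 - ⟪x, z⟫_ℂ) * (1 - ⟪z, y⟫_ℂ) / ((1 - ‖z‖ ^ 2 : ℝ) : ℂ) -
      ⟪lorentzLift z x, lorentzLift z y⟫_ℂ := by
    rw [inner_lorentzLift hz, sub_sub_cancel]
  rw [hsplit]
  refine (norm_sub_le _ _).trans (add_le_add (le_of_eq ?_) (norm_inner_le_norm _ _))
  rw [norm_div, norm_mul, Complex.norm_real, Real.norm_of_nonneg (one_sub_norm_sq_pos hz).le]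

end UnitBall

section BergmanDist

variable {n : ℕ} {x y z w a : En n} {R : ℝ}

lemma herm_eq_inner (z w : En n) : herm z w = ⟪w, z⟫_ℂ := by
  simp [herm, PiLp.inner_apply]

lemma norm_mobius_sq (hz : ‖z‖ < 1) (hw : ‖w‖ < 1) :
    ‖mobius z w‖ ^ 2 = 1 - (1 - ‖z‖ ^ 2) * (1 - ‖w‖ ^ 2) / ‖1 - ⟪z, w⟫_ℂ‖ ^ 2 := by
  by_cases hz0 : z = 0
  · simp [mobius, hz0]
  have hne : ‖1 - ⟪z, w⟫_ℂ‖ ≠ 0 := norm_ne_zero_iff.mpr (one_sub_inner_ne_zero hz hw)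
  rw [mobius, if_neg hz0, herm_eq_inner, herm_eq_inner, inner_self_eq_ofReal_norm_sq, norm_smul,
    norm_inv, mul_pow, norm_sub_smul_sub_sqrt_smul_sq hz0 hz.le]
  field_simp

lemma norm_mobius_lt_one (hz : ‖z‖ < 1) (hw : ‖w‖ < 1) : ‖mobius z w‖ < 1 := by
  have hρz := one_sub_norm_sq_pos hz
  have hρw := one_sub_norm_sq_pos hw
  have hne := norm_pos_iff.mpr (one_sub_inner_ne_zero hz hw)
  rw [← sq_lt_one_iff₀ (norm_nonneg _), norm_mobius_sq hz hw, sub_lt_self_iff]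
  positivity

lemma bergmanDist_eq_artanh (hz : ‖z‖ < 1) (hw : ‖w‖ < 1) :
    bergmanDist z w = Real.artanh ‖mobius z w‖ := by
  have := norm_nonneg (mobius z w)
  rw [bergmanDist, Real.artanh_eq_half_log ⟨by linarith, (norm_mobius_lt_one hz hw).le⟩]

lemma bergmanDist_nonneg (hz : ‖z‖ < 1) (hw : ‖w‖ < 1) : 0 ≤ bergmanDist z w := by
  rw [bergmanDist_eq_artanh hz hw]
  exact Real.artanh_nonneg (norm_nonneg _)

lemma cosh_bergmanDist (hz : ‖z‖ < 1) (hw : ‖w‖ < 1) :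
    Real.cosh (bergmanDist z w) = bergmanCosh z w := by
  have := norm_nonneg (mobius z w)
  rw [bergmanDist_eq_artanh hz hw, Real.cosh_artanh ⟨by linarith, norm_mobius_lt_one hz hw⟩,
    norm_mobius_sq hz hw, sub_sub_cancel, Real.sqrt_div' _ (by positivity),
    Real.sqrt_sq (norm_nonneg _), one_div_div, Real.sqrt_mul (one_sub_norm_sq_pos hz).le,
    bergmanCosh]

lemma sinh_bergmanDist (hx : ‖x‖ < 1) (hz : ‖z‖ < 1) :
    Real.sinh (bergmanDist x z) = ‖lorentzLift z x‖ / √(1 - ‖x‖ ^ 2) := by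
  have hρx := one_sub_norm_sq_pos hx
  have hρz := one_sub_norm_sq_pos hz
  rw [← sq_eq_sq₀ (Real.sinh_nonneg_iff.mpr (bergmanDist_nonneg hx hz)) (by positivity),
    Real.sinh_sq, cosh_bergmanDist hx hz, bergmanCosh_sq hx hz, div_pow, norm_lorentzLift_sq hz,
    Real.sq_sqrt hρx.le]
  field_simp

lemma bergmanDist_comm (hz : ‖z‖ < 1) (hw : ‖w‖ < 1) : bergmanDist z w = bergmanDist w z := by
  refine Real.cosh_strictMonoOn.injOn (bergmanDist_nonneg hz hw) (bergmanDist_nonneg hw hz) ?_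
  rw [cosh_bergmanDist hz hw, cosh_bergmanDist hw hz, bergmanCosh_comm]

lemma bergmanDist_triangle (hx : ‖x‖ < 1) (hy : ‖y‖ < 1) (hz : ‖z‖ < 1) :
    bergmanDist x y ≤ bergmanDist x z + bergmanDist z y := by
  have hρx := one_sub_norm_sq_pos hx
  have hρy := one_sub_norm_sq_pos hy
  have hρz := one_sub_norm_sq_pos hz
  have hcosh : Real.cosh (bergmanDist x y) ≤ Real.cosh (bergmanDist x z + bergmanDist y z) := by
    rw [Real.cosh_add, cosh_bergmanDist hx hy, cosh_bergmanDist hx hz, cosh_bergmanDist hy hz,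
      sinh_bergmanDist hx hz, sinh_bergmanDist hy hz, bergmanCosh_comm y z, bergmanCosh,
      bergmanCosh, bergmanCosh, div_le_iff₀ (by positivity)]
    refine (norm_one_sub_inner_le hz x y).trans (le_of_eq ?_)
    have := Real.sqrt_pos.mpr hρx
    have := Real.sqrt_pos.mpr hρy
    have := Real.sqrt_pos.mpr hρz
    nth_rewrite 1 [← Real.mul_self_sqrt hρz.le]
    field_simp
  rw [bergmanDist_comm hz hy]
  exact (Real.cosh_strictMonoOn.le_iff_le (bergmanDist_nonneg hx hy)
    (add_nonneg (bergmanDist_nonneg hx hz) (bergmanDist_nonneg hy hz))).mp hcosh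

lemma bergmanCosh_le_of_dist_lt (hw : ‖w‖ < 1) (ha : ‖a‖ < 1) (hz : ‖z‖ < 1)
    (h : bergmanDist z a < R) : bergmanCosh w a ≤ Real.exp R * bergmanCosh w z := by
  have hR : 0 ≤ R := (bergmanDist_nonneg hz ha).trans h.le
  have hd := bergmanDist_nonneg hw hz
  rw [← cosh_bergmanDist hw ha, ← cosh_bergmanDist hw hz]
  calc Real.cosh (bergmanDist w a)
      ≤ Real.cosh (bergmanDist w z + R) :=
        (Real.cosh_strictMonoOn.le_iff_le (bergmanDist_nonneg hw ha) (add_nonneg hd hR)).mpr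
          ((bergmanDist_triangle hw ha hz).trans (by linarith))
    _ = Real.cosh (bergmanDist w z) * Real.cosh R +
          Real.sinh (bergmanDist w z) * Real.sinh R := Real.cosh_add _ _
    _ ≤ Real.cosh (bergmanDist w z) * Real.cosh R +
          Real.cosh (bergmanDist w z) * Real.sinh R := by
        have := Real.sinh_nonneg_iff.mpr hR
        gcongr
        exact (Real.sinh_lt_cosh _).le
    _ = Real.exp R * Real.cosh (bergmanDist w z) := by rw [← mul_add, Real.cosh_add_sinh, mul_comm]

lemma one_sub_norm_sq_le_of_dist_lt (ha : ‖a‖ < 1) (hz : ‖z‖ < 1) (h : bergmanDist z a < R) :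
    1 - ‖z‖ ^ 2 ≤ Real.exp (2 * R) * (1 - ‖a‖ ^ 2) := by
  have hρa := one_sub_norm_sq_pos ha
  have hρz := one_sub_norm_sq_pos hz
  have h0 : ‖(0 : En n)‖ < 1 := by simp
  have hcosh := pow_le_pow_left₀ (bergmanCosh_nonneg _ _) (bergmanCosh_le_of_dist_lt h0 ha hz h) 2
  rw [mul_pow, bergmanCosh_sq h0 ha, bergmanCosh_sq h0 hz, ← Real.exp_nat_mul] at hcosh
  simp only [inner_zero_left, sub_zero, norm_one, one_pow, norm_zero, ne_eq, OfNat.ofNat_ne_zero,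
    not_false_eq_true, zero_pow, one_mul, mul_one_div, Nat.cast_ofNat] at hcosh
  rwa [div_le_div_iff₀ hρa hρz, one_mul] at hcosh

lemma norm_one_sub_inner_le_of_dist_lt (hw : ‖w‖ < 1) (ha : ‖a‖ < 1) (hz : ‖z‖ < 1)
    (h : bergmanDist z a < R) : ‖1 - ⟪w, a⟫_ℂ‖ ≤ Real.exp (2 * R) * ‖1 - ⟪w, z⟫_ℂ‖ := by
  have hρa := Real.sqrt_pos.mpr (one_sub_norm_sq_pos ha)
  have hρz := Real.sqrt_pos.mpr (one_sub_norm_sq_pos hz)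
  have hρw := Real.sqrt_pos.mpr (one_sub_norm_sq_pos hw)
  have hcosh := bergmanCosh_le_of_dist_lt hw ha hz h
  have hweight : √(1 - ‖a‖ ^ 2) ≤ Real.exp R * √(1 - ‖z‖ ^ 2) := by
    rw [bergmanDist_comm hz ha] at h
    refine Real.sqrt_le_iff.mpr ⟨by positivity, ?_⟩
    rw [mul_pow, ← Real.exp_nat_mul, Real.sq_sqrt (one_sub_norm_sq_pos hz).le]
    exact_mod_cast one_sub_norm_sq_le_of_dist_lt hz ha h
  rw [bergmanCosh, bergmanCosh, div_le_iff₀ (by positivity)] at hcosh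
  calc ‖1 - ⟪w, a⟫_ℂ‖
      ≤ Real.exp R * (‖1 - ⟪w, z⟫_ℂ‖ / (√(1 - ‖w‖ ^ 2) * √(1 - ‖z‖ ^ 2))) *
          (√(1 - ‖w‖ ^ 2) * √(1 - ‖a‖ ^ 2)) := hcosh
    _ ≤ Real.exp R * (‖1 - ⟪w, z⟫_ℂ‖ / (√(1 - ‖w‖ ^ 2) * √(1 - ‖z‖ ^ 2))) *
          (√(1 - ‖w‖ ^ 2) * (Real.exp R * √(1 - ‖z‖ ^ 2))) := by gcongr
    _ = Real.exp (2 * R) * ‖1 - ⟪w, z⟫_ℂ‖ := by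
        rw [two_mul, Real.exp_add]
        field_simp

lemma mem_bergmanBall_iff (ha : ‖a‖ < 1) (hR : 0 ≤ R) :
    z ∈ bergmanBall a R ↔ ‖z‖ < 1 ∧
      ‖1 - ⟪a, z⟫_ℂ‖ ^ 2 < Real.cosh R ^ 2 * ((1 - ‖a‖ ^ 2) * (1 - ‖z‖ ^ 2)) := by
  simp only [bergmanBall, unitBall, mem_ball_zero_iff, Set.mem_ofPred_eq]
  refine and_congr_right fun hz => ?_
  rw [← Real.cosh_strictMonoOn.lt_iff_lt (bergmanDist_nonneg ha hz) hR, cosh_bergmanDist ha hz,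
    ← pow_lt_pow_iff_left₀ (bergmanCosh_nonneg _ _) (Real.cosh_pos _).le two_ne_zero,
    bergmanCosh_sq ha hz,
    div_lt_iff₀ (mul_pos (one_sub_norm_sq_pos ha) (one_sub_norm_sq_pos hz))]

lemma isOpen_bergmanBall (ha : ‖a‖ < 1) (hR : 0 ≤ R) : IsOpen (bergmanBall a R) := by
  have hball : bergmanBall a R = {z | ‖z‖ < 1} ∩
      {z | ‖1 - ⟪a, z⟫_ℂ‖ ^ 2 < Real.cosh R ^ 2 * ((1 - ‖a‖ ^ 2) * (1 - ‖z‖ ^ 2))} :=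
    Set.ext fun _ => mem_bergmanBall_iff ha hR
  rw [hball]
  exact (isOpen_lt (by fun_prop) (by fun_prop)).inter (isOpen_lt (by fun_prop) (by fun_prop))

end BergmanDist

end Geometry

section Volume

lemma exists_unit_eq_smul {E : Type*} [NormedAddCommGroup E] [NormedSpace ℂ E] [Nontrivial E]
    (a : E) : ∃ e : E, ‖e‖ = 1 ∧ a = (‖a‖ : ℂ) • e := by
  rcases eq_or_ne a 0 with rfl | ha
  · obtain ⟨x, hx⟩ := exists_ne (0 : E)
    exact ⟨(‖x‖ : ℂ)⁻¹ • x, norm_smul_inv_norm hx, by simp⟩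
  · have ha' : (‖a‖ : ℂ) ≠ 0 := by simpa using ha
    exact ⟨(‖a‖ : ℂ)⁻¹ • a, norm_smul_inv_norm ha, by rw [smul_inv_smul₀ ha']⟩

section Ellipsoid

variable {n : ℕ} {e c z : En n} {s R : ℝ}

/-- The linear map scaling by `s` along the unit vector `e` and by `√s` on its orthogonal
complement. -/
def anisoDil (e : En n) (s : ℝ) : En n →ₗ[ℂ] En n :=
  (√s : ℂ) • LinearMap.transvection (((√s - 1 : ℝ) : ℂ) • (innerSL ℂ e).toLinearMap) e

lemma norm_anisoDil_sq (he : ‖e‖ = 1) (hs : 0 ≤ s) (x : En n) :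
    ‖anisoDil e s x‖ ^ 2 = s * (‖x‖ ^ 2 - ‖⟪e, x⟫_ℂ‖ ^ 2) + s ^ 2 * ‖⟪e, x⟫_ℂ‖ ^ 2 := by
  have hsqrt : √s ^ 2 = s := Real.sq_sqrt hs
  have happly : anisoDil e s x = (√s : ℂ) • (x + (((√s - 1 : ℝ) : ℂ) * ⟪e, x⟫_ℂ) • e) := by
    simp [anisoDil, LinearMap.transvection.apply]
  have hcross : RCLike.re ⟪x, (((√s - 1 : ℝ) : ℂ) * ⟪e, x⟫_ℂ) • e⟫_ℂ =
      (√s - 1) * ‖⟪e, x⟫_ℂ‖ ^ 2 := by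
    rw [inner_smul_right, mul_assoc, ← inner_conj_symm x e, Complex.mul_conj,
      Complex.normSq_eq_norm_sq]
    norm_cast
  have hpar : ‖(((√s - 1 : ℝ) : ℂ) * ⟪e, x⟫_ℂ) • e‖ ^ 2 = (√s - 1) ^ 2 * ‖⟪e, x⟫_ℂ‖ ^ 2 := by
    rw [norm_smul, norm_mul, he, Complex.norm_real, Real.norm_eq_abs, mul_one, mul_pow, sq_abs]
  rw [happly, norm_smul, mul_pow, Complex.norm_real, Real.norm_of_nonneg (Real.sqrt_nonneg _),
    hsqrt, @norm_add_sq ℂ, hcross, hpar]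
  linear_combination (s * ‖⟪e, x⟫_ℂ‖ ^ 2) * hsqrt

lemma det_anisoDil (he : ‖e‖ = 1) (hs : 0 ≤ s) :
    LinearMap.det ((anisoDil e s).restrictScalars ℝ) = s ^ (n + 1) := by
  have hfactor : (1 : ℂ) + (((√s - 1 : ℝ) : ℂ) • (innerSL ℂ e).toLinearMap) e = (√s : ℂ) := by
    simp [inner_self_eq_norm_sq_to_K, he]
  rw [LinearMap.det_restrictScalars, Algebra.norm_complex_apply, anisoDil, LinearMap.det_smul,
    LinearMap.transvection.det, finrank_euclideanSpace, Fintype.card_fin, hfactor, ← pow_succ,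
    ← Complex.ofReal_pow, Complex.normSq_ofReal, ← mul_pow, Real.mul_self_sqrt hs]

/-- The ellipsoid centred at `c` with semi-axis `s * R` along the complex line of the unit vector
`e` and `√s * R` in the orthogonal directions. -/
def anisoEllipsoid (e c : En n) (s R : ℝ) : Set (En n) :=
  {z | ‖anisoDil e s⁻¹ (z - c)‖ < R}

lemma mem_anisoEllipsoid_iff (he : ‖e‖ = 1) (hs : 0 < s) (hR : 0 ≤ R) :
    z ∈ anisoEllipsoid e c s R ↔
      (‖z - c‖ ^ 2 - ‖⟪e, z - c⟫_ℂ‖ ^ 2) / s + ‖⟪e, z - c⟫_ℂ‖ ^ 2 / s ^ 2 < R ^ 2 := by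
  rw [anisoEllipsoid, Set.mem_ofPred_eq, ← pow_lt_pow_iff_left₀ (norm_nonneg _) hR two_ne_zero,
    norm_anisoDil_sq he (inv_nonneg.mpr hs.le), inv_pow, inv_mul_eq_div, inv_mul_eq_div]

lemma volume_anisoEllipsoid (he : ‖e‖ = 1) (hs : 0 < s) :
    volume (anisoEllipsoid e c s R) =
      ENNReal.ofReal (s ^ (n + 1)) * volume (ball (0 : En n) R) := by
  have hdet := det_anisoDil he (inv_nonneg.mpr hs.le)
  have hpre : anisoEllipsoid e c s R =
      (· - c) ⁻¹' ((anisoDil e s⁻¹).restrictScalars ℝ ⁻¹' ball 0 R) := by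
    ext z
    simp [anisoEllipsoid]
  simp only [sub_eq_add_neg] at hpre
  rw [hpre, measure_preimage_add_right, Measure.addHaar_preimage_linearMap _
    (by rw [hdet]; positivity), hdet, inv_pow, inv_inv, abs_of_pos (by positivity)]

lemma norm_inner_sub_le_of_mem_anisoEllipsoid (he : ‖e‖ = 1) (hs : 0 < s) (hR : 0 ≤ R)
    (hz : z ∈ anisoEllipsoid e c s R) : ‖⟪e, z - c⟫_ℂ‖ ≤ s * R := by
  rw [mem_anisoEllipsoid_iff he hs hR] at hz
  have hperp : 0 ≤ (‖z - c‖ ^ 2 - ‖⟪e, z - c⟫_ℂ‖ ^ 2) / s := by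
    have := norm_inner_le_norm (𝕜 := ℂ) e (z - c)
    rw [he, one_mul] at this
    exact div_nonneg (by nlinarith [norm_nonneg ⟪e, z - c⟫_ℂ]) hs.le
  refine le_of_sq_le_sq ?_ (by positivity)
  rw [mul_pow, ← div_le_iff₀' (by positivity)]
  linarith

lemma norm_sub_sq_le_of_mem_anisoEllipsoid (he : ‖e‖ = 1) (hs : 0 < s) (hs1 : s ≤ 1)
    (hR : 0 ≤ R) (hz : z ∈ anisoEllipsoid e c s R) : ‖z - c‖ ^ 2 ≤ s * R ^ 2 := by
  rw [mem_anisoEllipsoid_iff he hs hR] at hz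
  have hpar : ‖⟪e, z - c⟫_ℂ‖ ^ 2 / s ≤ ‖⟪e, z - c⟫_ℂ‖ ^ 2 / s ^ 2 := by
    gcongr
    nlinarith
  rw [sub_div] at hz
  rw [← div_le_iff₀' hs]
  linarith

end Ellipsoid

section CarlesonRegion

variable {n : ℕ} {w z e : En n} {s : ℝ}

/-- The nonisotropic ball `{z ∈ 𝔹ₙ : |1 - ⟨z,w⟩| < s}`. -/
def carlesonRegion (w : En n) (s : ℝ) : Set (En n) :=
  {z | ‖z‖ < 1 ∧ ‖1 - ⟪w, z⟫_ℂ‖ < s}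

lemma isOpen_carlesonRegion (w : En n) (s : ℝ) : IsOpen (carlesonRegion w s) := by
  have hlt : IsOpen {z : En n | ‖1 - ⟪w, z⟫_ℂ‖ < s} := isOpen_lt (by fun_prop) (by fun_prop)
  exact (isOpen_lt continuous_norm continuous_const).inter hlt

lemma norm_one_sub_inner_unit_lt (he : ‖e‖ = 1) (hwe : w = (‖w‖ : ℂ) • e) (hw : ‖w‖ ≤ 1)
    (hz : z ∈ carlesonRegion w s) : ‖1 - ⟪e, z⟫_ℂ‖ < 2 * s := by
  have hez : ‖⟪e, z⟫_ℂ‖ ≤ 1 := by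
    simpa [he] using (norm_inner_le_norm (𝕜 := ℂ) e z).trans (by simpa [he] using hz.1.le)
  have hws : 1 - ‖w‖ < s := by
    have := one_sub_norm_le_norm_one_sub_inner (z := w) hz.1.le
    rw [norm_one_sub_inner_comm] at this
    exact this.trans_lt hz.2
  have hsplit : 1 - ⟪e, z⟫_ℂ = (1 - ⟪w, z⟫_ℂ) + ((‖w‖ - 1 : ℝ) : ℂ) * ⟪e, z⟫_ℂ := by
    have : ⟪w, z⟫_ℂ = ‖w‖ * ⟪e, z⟫_ℂ := by
      conv_lhs => rw [hwe, inner_smul_left, Complex.conj_ofReal]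
    rw [this]
    push_cast
    ring
  calc ‖1 - ⟪e, z⟫_ℂ‖ ≤ ‖1 - ⟪w, z⟫_ℂ‖ + (1 - ‖w‖) * ‖⟪e, z⟫_ℂ‖ := by
        rw [hsplit]
        refine (norm_add_le _ _).trans_eq ?_
        rw [norm_mul, Complex.norm_real, Real.norm_eq_abs, abs_sub_comm,
          abs_of_nonneg (by linarith)]
    _ < 2 * s := by nlinarith [hz.2]

lemma carlesonRegion_subset_anisoEllipsoid (he : ‖e‖ = 1) (hwe : w = (‖w‖ : ℂ) • e)
    (hw : ‖w‖ ≤ 1) (hs : 0 < s) : carlesonRegion w s ⊆ anisoEllipsoid e e s 3 := by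
  intro z hz
  have hpar := norm_one_sub_inner_unit_lt he hwe hw hz
  have hin : ⟪e, z - e⟫_ℂ = -(1 - ⟪e, z⟫_ℂ) := by
    rw [inner_sub_right, inner_self_eq_ofReal_norm_sq, he]
    simp
  have hperp : ‖z - e‖ ^ 2 - ‖1 - ⟪e, z⟫_ℂ‖ ^ 2 = ‖z‖ ^ 2 - ‖⟪e, z⟫_ℂ‖ ^ 2 := by
    rw [@norm_sub_sq ℂ, norm_one_sub_sq, he, inner_re_symm, RCLike.re_eq_complex_re]
    ring
  have hone : 1 - ‖⟪e, z⟫_ℂ‖ ≤ ‖1 - ⟪e, z⟫_ℂ‖ := by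
    simpa using norm_sub_norm_le (1 : ℂ) ⟪e, z⟫_ℂ
  rw [mem_anisoEllipsoid_iff he hs (by norm_num), hin, norm_neg, hperp]
  have h₁ : (‖z‖ ^ 2 - ‖⟪e, z⟫_ℂ‖ ^ 2) / s ≤ 4 := by
    rw [div_le_iff₀ hs]
    nlinarith [hz.1, norm_nonneg z, sq_nonneg (1 - ‖⟪e, z⟫_ℂ‖)]
  have h₂ : ‖1 - ⟪e, z⟫_ℂ‖ ^ 2 / s ^ 2 ≤ 4 := by
    rw [div_le_iff₀ (by positivity)]
    nlinarith [norm_nonneg (1 - ⟪e, z⟫_ℂ)]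
  linarith

lemma volume_carlesonRegion_le [NeZero n] (hw : ‖w‖ ≤ 1) (hs : 0 < s) :
    volume (carlesonRegion w s) ≤
      ENNReal.ofReal (s ^ (n + 1)) * volume (ball (0 : En n) 3) := by
  obtain ⟨e, he, hwe⟩ := exists_unit_eq_smul w
  rw [← volume_anisoEllipsoid he hs]
  exact measure_mono (carlesonRegion_subset_anisoEllipsoid he hwe hw hs)

end CarlesonRegion

section BergmanBall

variable {n : ℕ} {a z e : En n} {η κ R : ℝ}

lemma norm_one_sub_inner_sq_lt_of_close (hη : 7 * κ * η = κ - 1) (hκ : 1 < κ)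
    (ha : ‖a‖ < 1) (hpar : ‖⟪a, z - a⟫_ℂ‖ ≤ (1 - ‖a‖ ^ 2) * η)
    (hsq : ‖z - a‖ ^ 2 ≤ (1 - ‖a‖ ^ 2) * η ^ 2) :
    ‖z‖ < 1 ∧ ‖1 - ⟪a, z⟫_ℂ‖ ^ 2 < κ * ((1 - ‖a‖ ^ 2) * (1 - ‖z‖ ^ 2)) := by
  have hρ := one_sub_norm_sq_pos ha
  have hzeq : z = a + (z - a) := (add_sub_cancel a z).symm
  set ρ := 1 - ‖a‖ ^ 2 with hρdef
  have hη0 : 0 < η := by nlinarith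
  have hη1 : η < 1 / 7 := by nlinarith
  have hnorm : ‖z‖ ^ 2 = ‖a‖ ^ 2 + 2 * (⟪a, z - a⟫_ℂ).re + ‖z - a‖ ^ 2 := by
    nth_rewrite 1 [hzeq]
    exact norm_add_sq (𝕜 := ℂ) a _
  have hlow : ρ * (1 - 2 * η - η ^ 2) ≤ 1 - ‖z‖ ^ 2 := by
    have := (abs_le.mp ((Complex.abs_re_le_norm _).trans hpar)).2
    rw [hnorm]
    nlinarith
  have hupp : ‖1 - ⟪a, z⟫_ℂ‖ ≤ ρ * (1 + η) := by
    have hsplit : 1 - ⟪a, z⟫_ℂ = (ρ : ℂ) - ⟪a, z - a⟫_ℂ := by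
      rw [inner_sub_right, inner_self_eq_ofReal_norm_sq, hρdef]
      push_cast
      ring
    rw [hsplit]
    refine (norm_sub_le _ _).trans ?_
    rw [Complex.norm_real, Real.norm_of_nonneg hρ.le]
    linarith
  have hgap : (1 + η) ^ 2 < κ * (1 - 2 * η - η ^ 2) := by
    have : 0 < 5 * κ - κ * η - 2 - η := by nlinarith
    linarith [mul_pos hη0 this]
  have hz : 0 < 1 - ‖z‖ ^ 2 := (mul_pos hρ (by nlinarith)).trans_le hlow
  refine ⟨by nlinarith [norm_nonneg z], ?_⟩
  calc ‖1 - ⟪a, z⟫_ℂ‖ ^ 2 ≤ (ρ * (1 + η)) ^ 2 := by gcongr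
    _ = ρ ^ 2 * (1 + η) ^ 2 := mul_pow _ _ _
    _ < ρ ^ 2 * (κ * (1 - 2 * η - η ^ 2)) := by gcongr
    _ = κ * (ρ * (ρ * (1 - 2 * η - η ^ 2))) := by ring
    _ ≤ κ * (ρ * (1 - ‖z‖ ^ 2)) := by gcongr

lemma anisoEllipsoid_subset_bergmanBall (he : ‖e‖ = 1) (hae : a = (‖a‖ : ℂ) • e)
    (ha : ‖a‖ < 1) (hR : 0 < R) (hη : 7 * Real.cosh R ^ 2 * η = Real.cosh R ^ 2 - 1) :
    anisoEllipsoid e a (1 - ‖a‖ ^ 2) η ⊆ bergmanBall a R := by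
  intro z hz
  have hρ := one_sub_norm_sq_pos ha
  have hκ : 1 < Real.cosh R ^ 2 := one_lt_pow₀ (Real.one_lt_cosh.mpr hR.ne') two_ne_zero
  have hη0 : 0 ≤ η := by nlinarith
  refine (mem_bergmanBall_iff ha hR.le).mpr (norm_one_sub_inner_sq_lt_of_close hη hκ ha ?_
    (norm_sub_sq_le_of_mem_anisoEllipsoid he hρ (by simp) hη0 hz))
  have hinner : ‖⟪a, z - a⟫_ℂ‖ = ‖a‖ * ‖⟪e, z - a⟫_ℂ‖ := by
    nth_rewrite 1 [hae]
    rw [inner_smul_left, norm_mul, Complex.conj_ofReal, Complex.norm_real, norm_norm]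
  rw [hinner]
  have := norm_inner_sub_le_of_mem_anisoEllipsoid he hρ hη0 hz
  nlinarith [norm_nonneg ⟪e, z - a⟫_ℂ]

lemma exists_le_volume_bergmanBall (n : ℕ) [NeZero n] (hR : 0 < R) :
    ∃ c > (0 : ℝ), ∀ a : En n, ‖a‖ < 1 →
      ENNReal.ofReal (c * (1 - ‖a‖ ^ 2) ^ (n + 1)) ≤ volume (bergmanBall a R) := by
  have hκ : 1 < Real.cosh R ^ 2 := one_lt_pow₀ (Real.one_lt_cosh.mpr hR.ne') two_ne_zero
  obtain ⟨η, hη⟩ : ∃ η, 7 * Real.cosh R ^ 2 * η = Real.cosh R ^ 2 - 1 :=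
    ⟨(Real.cosh R ^ 2 - 1) / (7 * Real.cosh R ^ 2), mul_div_cancel₀ _ (by positivity)⟩
  have hfin : volume (ball (0 : En n) η) ≠ ∞ := measure_ball_lt_top.ne
  refine ⟨(volume (ball (0 : En n) η)).toReal,
    ENNReal.toReal_pos (measure_ball_pos _ _ (by nlinarith)).ne' hfin, fun a ha => ?_⟩
  obtain ⟨e, he, hae⟩ := exists_unit_eq_smul a
  refine le_trans (le_of_eq ?_) (measure_mono (anisoEllipsoid_subset_bergmanBall he hae ha hR hη))
  rw [volume_anisoEllipsoid he (one_sub_norm_sq_pos ha), mul_comm,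
    ENNReal.ofReal_mul (pow_nonneg (one_sub_norm_sq_pos ha).le _), ENNReal.ofReal_toReal hfin]

end BergmanBall

end Volume

section ForelliRudin

section Polar

open Module

lemma lintegral_eq_lintegral_sphere_prod {E : Type*} [NormedAddCommGroup E] [NormedSpace ℝ E]
    [FiniteDimensional ℝ E] [Nontrivial E] [MeasurableSpace E] [BorelSpace E] (μ : Measure E)
    [μ.IsAddHaarMeasure] (f : E → ℝ≥0∞) :
    ∫⁻ z, f z ∂μ = ∫⁻ p : sphere (0 : E) 1 × Set.Ioi (0 : ℝ), f (p.2.1 • p.1.1)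
      ∂μ.toSphere.prod (.volumeIoiPow (finrank ℝ E - 1)) := by
  calc ∫⁻ z, f z ∂μ = ∫⁻ z : ({0}ᶜ : Set E), f z ∂μ.comap (↑) := by
        rw [lintegral_subtype_comap (measurableSet_singleton _).compl, restrict_compl_singleton]
    _ = _ := by
        rw [← μ.measurePreserving_homeomorphUnitSphereProd.lintegral_comp_emb
          (Homeomorph.measurableEmbedding _)]
        refine lintegral_congr fun z => ?_
        rw [← homeomorphUnitSphereProd_symm_apply_coe, Homeomorph.symm_apply_apply]

lemma le_volumeIoiPow_sdiff (d : ℕ) (x : Set.Ioi (0 : ℝ)) (hx : x.1 < 1) :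
    ENNReal.ofReal ((1 - x) / (d + 1)) ≤
      Measure.volumeIoiPow d (Set.Iio ⟨1, Set.mem_Ioi.mpr one_pos⟩ \ Set.Iio x) := by
  refine le_trans ?_ le_measure_sdiff
  rw [Measure.volumeIoiPow_apply_Iio, Measure.volumeIoiPow_apply_Iio,
    ← ENNReal.ofReal_sub _ (by have := x.2.out; positivity), ← sub_div, one_pow]
  gcongr
  exact pow_le_of_le_one x.2.out.le hx.le d.succ_ne_zero

lemma lintegral_rpow_Ioo {s t : ℝ} (hs : 0 ≤ s) (ht : -1 < t) :
    ∫⁻ r in Set.Ioo 0 s, ENNReal.ofReal (r ^ t) = ENNReal.ofReal (s ^ (t + 1) / (t + 1)) := by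
  have hint : IntervalIntegrable (fun r : ℝ => r ^ t) volume 0 s :=
    intervalIntegral.intervalIntegrable_rpow' ht
  rw [Measure.restrict_congr_set Ioo_ae_eq_Ioc, ← ofReal_integral_eq_lintegral_ofReal
    ((intervalIntegrable_iff_integrableOn_Ioc_of_le hs).mp hint),
    ← intervalIntegral.integral_of_le hs, integral_rpow (.inl ht),
    Real.zero_rpow (by linarith), sub_zero]
  filter_upwards [ae_restrict_mem measurableSet_Ioc] with r hr
  exact Real.rpow_nonneg hr.1.le _

lemma lintegral_one_sub_rpow_Ioo {s t : ℝ} (hs : 0 ≤ s) (ht : -1 < t) :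
    ∫⁻ r in Set.Ioo (1 - s) 1, ENNReal.ofReal ((1 - r) ^ t) =
      ENNReal.ofReal (s ^ (t + 1) / (t + 1)) := by
  rw [← lintegral_rpow_Ioo hs ht, ← lintegral_indicator measurableSet_Ioo,
    ← lintegral_indicator measurableSet_Ioo, ← lintegral_sub_left_eq_self _ 1]
  refine lintegral_congr fun r => ?_
  have hmem : 1 - r ∈ Set.Ioo (1 - s) 1 ↔ r ∈ Set.Ioo 0 s := by
    simp only [Set.mem_Ioo, sub_lt_sub_iff_left, sub_lt_self_iff, and_comm]
  simp only [Set.indicator_apply, hmem, sub_sub_cancel]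

lemma measure_lt_inv_mul_rpow_le {Ω : Type*} [MeasurableSpace Ω] {ν : Measure Ω} {F : Ω → ℝ}
    {C c d ρ : ℝ} (hρ : 0 < ρ) (hle : ∀ᵐ x ∂ν, ρ ≤ F x)
    (hν : ∀ s > 0, ν {x | F x < s} ≤ ENNReal.ofReal (C * s ^ d)) {t : ℝ} (ht : 0 < t) :
    ν {x | t < (F x)⁻¹} * ENNReal.ofReal (t ^ (d + c - 1)) ≤
      (Set.Ioo 0 ρ⁻¹).indicator (fun t => ENNReal.ofReal C * ENNReal.ofReal (t ^ (c - 1))) t := by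
  by_cases htρ : t < ρ⁻¹
  · have hsub : ν {x | t < (F x)⁻¹} ≤ ν {x | F x < t⁻¹} :=
      measure_mono_ae (hle.mono fun x _ h => lt_inv_of_lt_inv₀ ht h)
    rw [Set.indicator_of_mem (show t ∈ Set.Ioo 0 ρ⁻¹ from ⟨ht, htρ⟩)]
    calc _ ≤ ENNReal.ofReal (C * t⁻¹ ^ d) * ENNReal.ofReal (t ^ (d + c - 1)) := by
          gcongr
          exact hsub.trans (hν _ (inv_pos.mpr ht))
      _ = _ := by
          rw [ENNReal.ofReal_mul' (by positivity), mul_assoc, ← ENNReal.ofReal_mul (by positivity),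
            Real.inv_rpow ht.le, ← Real.rpow_neg ht.le, ← Real.rpow_add ht]
          ring_nf
  · have hnull : ν {x | t < (F x)⁻¹} = 0 :=
      measure_eq_zero_iff_ae_notMem.mpr
        (hle.mono fun x hx h => htρ (h.trans_le (inv_anti₀ hρ hx)))
    simp only [hnull, zero_mul, zero_le]

lemma lintegral_rpow_neg_le {Ω : Type*} [MeasurableSpace Ω] (ν : Measure Ω) {F : Ω → ℝ}
    (hF : AEMeasurable F ν) {C c d ρ : ℝ} (hρ : 0 < ρ) (hc : 0 < c) (hdc : 0 < d + c)
    (hle : ∀ᵐ x ∂ν, ρ ≤ F x) (hν : ∀ s > 0, ν {x | F x < s} ≤ ENNReal.ofReal (C * s ^ d)) :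
    ∫⁻ x, ENNReal.ofReal (F x ^ (-(d + c))) ∂ν ≤
      ENNReal.ofReal ((d + c) * C / c * ρ ^ (-c)) := by
  have hpow : ∀ᵐ x ∂ν, ENNReal.ofReal (F x ^ (-(d + c))) = ENNReal.ofReal ((F x)⁻¹ ^ (d + c)) :=
    hle.mono fun x hx => by rw [Real.inv_rpow (hρ.le.trans hx), Real.rpow_neg (hρ.le.trans hx)]
  rw [lintegral_congr_ae hpow, lintegral_rpow_eq_lintegral_meas_lt_mul ν
    (hle.mono fun x hx => inv_nonneg.mpr (hρ.le.trans hx)) hF.inv hdc]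
  calc _ ≤ ENNReal.ofReal (d + c) * (ENNReal.ofReal C * ENNReal.ofReal (ρ⁻¹ ^ c / c)) := by
        gcongr
        refine (setLIntegral_mono' measurableSet_Ioi fun t ht =>
          measure_lt_inv_mul_rpow_le hρ hle hν ht).trans
          ((setLIntegral_le_lintegral _ _).trans_eq ?_)
        rw [lintegral_indicator measurableSet_Ioo, lintegral_const_mul _ (by fun_prop),
          lintegral_rpow_Ioo (inv_pos.mpr hρ).le (by linarith), sub_add_cancel]
    _ = _ := by
        rw [← ENNReal.ofReal_mul' (by positivity), ← ENNReal.ofReal_mul hdc.le,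
          Real.inv_rpow hρ.le, ← Real.rpow_neg hρ.le]
        congr 1
        ring

lemma lintegral_volumeIoiPow_one_sub_rpow_le (d : ℕ) {s t : ℝ} (hs : 0 ≤ s) (ht : -1 < t) :
    ∫⁻ r : Set.Ioi (0 : ℝ),
        (Set.Ioo (1 - s) 1).indicator (fun r => ENNReal.ofReal ((1 - r) ^ t)) r.1
        ∂Measure.volumeIoiPow d ≤ ENNReal.ofReal (s ^ (t + 1) / (t + 1)) := by
  have hmeas : Measurable fun r : Set.Ioi (0 : ℝ) =>
      (Set.Ioo (1 - s) 1).indicator (fun r => ENNReal.ofReal ((1 - r) ^ t)) r.1 :=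
    Measurable.comp (g := (Set.Ioo (1 - s) 1).indicator fun r => ENNReal.ofReal ((1 - r) ^ t))
      (Measurable.indicator (by fun_prop) measurableSet_Ioo) measurable_subtype_coe
  rw [Measure.volumeIoiPow, lintegral_withDensity_eq_lintegral_mul₀ (by fun_prop)
    hmeas.aemeasurable,
    ← lintegral_one_sub_rpow_Ioo hs ht, ← lintegral_indicator measurableSet_Ioo]
  simp only [Pi.mul_apply]
  rw [lintegral_subtype_comap measurableSet_Ioi fun r => ENNReal.ofReal (r ^ d) *
    (Set.Ioo (1 - s) 1).indicator (fun r => ENNReal.ofReal ((1 - r) ^ t)) r]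
  refine (setLIntegral_mono' measurableSet_Ioi fun r hr => ?_).trans
    (setLIntegral_le_lintegral (Set.Ioi 0) _)
  by_cases hrs : r ∈ Set.Ioo (1 - s) 1
  · refine mul_le_of_le_one_left' (ENNReal.ofReal_le_one.mpr (pow_le_one₀ hr.out.le hrs.2.le))
  · simp [hrs]

end Polar

section SphericalCap

variable {n : ℕ} {w : En n} {s t : ℝ}

/-- The nonisotropic cap `{ζ ∈ ∂𝔹ₙ : |1 - ⟨ζ,w⟩| < s}`. -/
def sphericalCap (w : En n) (s : ℝ) : Set (sphere (0 : En n) 1) :=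
  {ζ | ‖1 - ⟪w, ζ.1⟫_ℂ‖ < s}

lemma measurableSet_sphericalCap (w : En n) (s : ℝ) : MeasurableSet (sphericalCap w s) :=
  (isOpen_lt (f := fun ζ : sphere (0 : En n) 1 => ‖1 - ⟪w, ζ.1⟫_ℂ‖) (by fun_prop)
    continuous_const).measurableSet

lemma norm_smul_sphere (ζ : sphere (0 : En n) 1) {r : ℝ} (hr : 0 ≤ r) : ‖r • ζ.1‖ = r := by
  rw [norm_smul, norm_eq_of_mem_sphere, mul_one, Real.norm_of_nonneg hr]

lemma one_sub_inner_smul (w z : En n) (r : ℝ) :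
    1 - ⟪w, r • z⟫_ℂ = (1 - ⟪w, z⟫_ℂ) + ((1 - r : ℝ) : ℂ) * ⟪w, z⟫_ℂ := by
  rw [← Complex.coe_smul, inner_smul_right]
  push_cast
  ring

lemma norm_ofReal_one_sub_mul_inner_le (hw : ‖w‖ ≤ 1) (ζ : sphere (0 : En n) 1) {r : ℝ}
    (hr : r ≤ 1) : ‖((1 - r : ℝ) : ℂ) * ⟪w, ζ.1⟫_ℂ‖ ≤ 1 - r := by
  have hwζ : ‖⟪w, ζ.1⟫_ℂ‖ ≤ 1 := by
    simpa using (norm_inner_le_norm (𝕜 := ℂ) w ζ.1).trans (by simpa using hw)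
  rw [norm_mul, Complex.norm_real, Real.norm_of_nonneg (by linarith)]
  exact mul_le_of_le_one_right (by linarith) hwζ

lemma smul_mem_carlesonRegion (hw : ‖w‖ ≤ 1) {ζ : sphere (0 : En n) 1}
    (hζ : ζ ∈ sphericalCap w s) {r : ℝ} (hr0 : 0 ≤ r) (hrs : 1 - s ≤ r) (hr1 : r < 1) :
    r • ζ.1 ∈ carlesonRegion w (2 * s) := by
  refine ⟨by rwa [norm_smul_sphere ζ hr0], ?_⟩
  rw [one_sub_inner_smul]
  have h := norm_ofReal_one_sub_mul_inner_le hw ζ hr1.le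
  have hζ' : ‖1 - ⟪w, ζ.1⟫_ℂ‖ < s := hζ
  exact (norm_add_le _ _).trans_lt (by linarith)

lemma mem_sphericalCap_of_smul_mem (hw : ‖w‖ ≤ 1) {ζ : sphere (0 : En n) 1} {r : ℝ}
    (hr : 0 ≤ r) (h : r • ζ.1 ∈ carlesonRegion w s) :
    ζ ∈ sphericalCap w (2 * s) ∧ r ∈ Set.Ioo (1 - s) 1 := by
  have hr1 : r < 1 := by simpa [norm_smul_sphere ζ hr] using h.1
  have hrs : 1 - r < s := by
    have := one_sub_norm_le_norm_one_sub_inner (z := r • ζ.1) hw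
    rw [norm_smul_sphere ζ hr] at this
    exact this.trans_lt h.2
  refine ⟨?_, by linarith, hr1⟩
  have hsplit : 1 - ⟪w, ζ.1⟫_ℂ = (1 - ⟪w, r • ζ.1⟫_ℂ) - ((1 - r : ℝ) : ℂ) * ⟪w, ζ.1⟫_ℂ := by
    rw [one_sub_inner_smul, add_sub_cancel_right]
  change ‖1 - ⟪w, ζ.1⟫_ℂ‖ < 2 * s
  rw [hsplit]
  have := norm_ofReal_one_sub_mul_inner_le hw ζ hr1.le
  exact (norm_sub_le _ _).trans_lt (by linarith [h.2])

lemma toSphere_sphericalCap_mul_le [NeZero n] (hw : ‖w‖ ≤ 1) (hs : 0 < s) (hs1 : s < 1) :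
    (volume : Measure (En n)).toSphere (sphericalCap w s) * ENNReal.ofReal (s / (2 * n)) ≤
      volume (carlesonRegion w (2 * s)) := by
  set I : Set (Set.Ioi (0 : ℝ)) :=
    Set.Iio ⟨1, Set.mem_Ioi.mpr one_pos⟩ \ Set.Iio ⟨1 - s, by simpa using hs1⟩
  have hd : ((Module.finrank ℝ (En n) - 1 : ℕ) : ℝ) + 1 = 2 * n := by
    rw [finrank_real_of_complex, finrank_euclideanSpace, Fintype.card_fin]
    have : 1 ≤ 2 * n := by have := NeZero.pos n; omega
    push_cast [this]
    ring
  calc _ ≤ (volume : Measure (En n)).toSphere (sphericalCap w s) *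
          Measure.volumeIoiPow (Module.finrank ℝ (En n) - 1) I := by
        gcongr
        have := le_volumeIoiPow_sdiff (Module.finrank ℝ (En n) - 1) ⟨1 - s, by simpa using hs1⟩
          (by simpa using hs)
        rwa [hd, sub_sub_cancel] at this
    _ = ∫⁻ p, (sphericalCap w s ×ˢ I).indicator 1 p ∂(volume : Measure (En n)).toSphere.prod
          (.volumeIoiPow (Module.finrank ℝ (En n) - 1)) := by
        rw [lintegral_indicator_one ((measurableSet_sphericalCap w s).prod
          (measurableSet_Iio.diff measurableSet_Iio)), Measure.prod_prod]
    _ ≤ ∫⁻ p, (carlesonRegion w (2 * s)).indicator 1 (p.2.1 • p.1.1)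
          ∂(volume : Measure (En n)).toSphere.prod
          (.volumeIoiPow (Module.finrank ℝ (En n) - 1)) := by
        refine lintegral_mono fun p => Set.indicator_apply_le' (fun hp => ?_) fun _ => zero_le
        have hr0 : 1 - s ≤ p.2.1 := not_lt.mp hp.2.2
        rw [Set.indicator_of_mem (smul_mem_carlesonRegion hw hp.1 p.2.2.out.le hr0 hp.2.1)]
        rfl
    _ = volume (carlesonRegion w (2 * s)) := by
        rw [← lintegral_eq_lintegral_sphere_prod,
          lintegral_indicator_one (isOpen_carlesonRegion w _).measurableSet]

lemma exists_toSphere_sphericalCap_le (n : ℕ) [NeZero n] :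
    ∃ C > (0 : ℝ), ∀ w : En n, ‖w‖ ≤ 1 → ∀ s > 0,
      (volume : Measure (En n)).toSphere (sphericalCap w s) ≤ ENNReal.ofReal (C * s ^ n) := by
  have hn : (0 : ℝ) < n := Nat.cast_pos.mpr (NeZero.pos n)
  have hV : volume (ball (0 : En n) 3) ≠ ∞ := measure_ball_lt_top.ne
  set V := (volume (ball (0 : En n) 3)).toReal with hVdef
  have hV0 : 0 < V := ENNReal.toReal_pos (measure_ball_pos _ _ (by norm_num)).ne' hV
  refine ⟨2 * n * 2 ^ (n + 1) * V, by positivity, fun w hw s hs => ?_⟩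
  rcases lt_or_ge s 1 with hs1 | hs1
  · have hle := (toSphere_sphericalCap_mul_le hw hs hs1).trans
      (volume_carlesonRegion_le hw (by positivity))
    rw [← ENNReal.ofReal_toReal hV, ← ENNReal.ofReal_mul (by positivity),
      ← ENNReal.le_div_iff_mul_le (.inl (ENNReal.ofReal_pos.mpr (by positivity)).ne')
        (.inl ENNReal.ofReal_ne_top),
      ← ENNReal.ofReal_div_of_pos (by positivity)] at hle
    refine hle.trans_eq (congrArg _ ?_)
    rw [mul_pow, pow_succ s, ← hVdef]
    field_simp
  · calc (volume : Measure (En n)).toSphere (sphericalCap w s)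
        ≤ (volume : Measure (En n)).toSphere Set.univ := measure_mono (Set.subset_univ _)
      _ = ENNReal.ofReal (2 * n) * volume (ball (0 : En n) 1) := by
          rw [Measure.toSphere_apply_univ, finrank_real_of_complex, finrank_euclideanSpace,
            Fintype.card_fin, ← ENNReal.ofReal_natCast]
          push_cast
          rfl
      _ ≤ ENNReal.ofReal (2 * n) * ENNReal.ofReal V := by
          rw [hVdef, ENNReal.ofReal_toReal hV]
          gcongr
          norm_num
      _ ≤ ENNReal.ofReal (2 * n * 2 ^ (n + 1) * V * s ^ n) := by
          rw [← ENNReal.ofReal_mul (by positivity)]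
          have h1 : (1 : ℝ) ≤ 2 ^ (n + 1) := one_le_pow₀ (by norm_num)
          have h2 : (1 : ℝ) ≤ s ^ n := one_le_pow₀ hs1
          refine ENNReal.ofReal_le_ofReal ?_
          calc 2 * n * V = 2 * n * 1 * V * 1 := by ring
            _ ≤ _ := by gcongr

lemma exists_lintegral_carlesonRegion_le (n : ℕ) [NeZero n] (ht : -1 < t) :
    ∃ C > (0 : ℝ), ∀ w : En n, ‖w‖ ≤ 1 → ∀ s > 0,
      ∫⁻ z in carlesonRegion w s, ENNReal.ofReal ((1 - ‖z‖) ^ t) ≤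
        ENNReal.ofReal (C * s ^ (n + 1 + t)) := by
  obtain ⟨C, hC, hcap⟩ := exists_toSphere_sphericalCap_le n
  have ht' : 0 < t + 1 := by linarith
  refine ⟨C * 2 ^ n / (t + 1), by positivity, fun w hw s hs => ?_⟩
  set h : ℝ → ℝ≥0∞ := (Set.Ioo (1 - s) 1).indicator fun r => ENNReal.ofReal ((1 - r) ^ t) with hh
  have hmeas : Measurable h :=
    Measurable.indicator (f := fun r : ℝ => ENNReal.ofReal ((1 - r) ^ t)) (by fun_prop)
      measurableSet_Ioo
  rw [← lintegral_indicator (isOpen_carlesonRegion w s).measurableSet,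
    lintegral_eq_lintegral_sphere_prod]
  calc _ ≤ ∫⁻ p, (sphericalCap w (2 * s)).indicator 1 p.1 * h p.2.1
          ∂(volume : Measure (En n)).toSphere.prod
            (.volumeIoiPow (Module.finrank ℝ (En n) - 1)) := by
        refine lintegral_mono fun p => Set.indicator_apply_le' (fun hp => ?_) fun _ => zero_le
        obtain ⟨hcap, hr⟩ := mem_sphericalCap_of_smul_mem hw p.2.2.out.le hp
        rw [hh, Set.indicator_of_mem hcap, Set.indicator_of_mem hr,
          norm_smul_sphere _ p.2.2.out.le, Pi.one_apply, one_mul]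
    _ = (volume : Measure (En n)).toSphere (sphericalCap w (2 * s)) *
          ∫⁻ r : Set.Ioi (0 : ℝ), h r.1 ∂.volumeIoiPow (Module.finrank ℝ (En n) - 1) := by
        rw [lintegral_prod_mul (f := (sphericalCap w (2 * s)).indicator 1)
          (g := fun r : Set.Ioi (0 : ℝ) => h r.1)
          (measurable_one.indicator (measurableSet_sphericalCap w _)).aemeasurable
          (hmeas.comp measurable_subtype_coe).aemeasurable,
          lintegral_indicator_one (measurableSet_sphericalCap w _)]
    _ ≤ ENNReal.ofReal (C * (2 * s) ^ n) * ENNReal.ofReal (s ^ (t + 1) / (t + 1)) := by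
        gcongr
        · exact hcap w hw _ (by positivity)
        · exact lintegral_volumeIoiPow_one_sub_rpow_le _ hs.le ht
    _ = _ := by
        have hsplit : s ^ (n + 1 + t) = s ^ n * s ^ (t + 1) := by
          rw [← Real.rpow_natCast, ← Real.rpow_add hs, add_assoc, add_comm 1 t]
        rw [← ENNReal.ofReal_mul (by positivity), mul_pow, hsplit]
        congr 1
        ring

end SphericalCap

section WeightedVolume

variable {n : ℕ} {t : ℝ}

lemma rpow_le_rpow_abs_mul {K x y : ℝ} (hK : 0 < K) (hy : 0 < y) (h1 : y ≤ K * x)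
    (h2 : x ≤ K * y) (t : ℝ) : x ^ t ≤ K ^ |t| * y ^ t := by
  have hx : 0 < x := pos_of_mul_pos_right (hy.trans_le h1) hK.le
  have hxy : 0 < x / y := by positivity
  rw [← div_le_iff₀ (by positivity), ← Real.div_rpow hx.le hy.le]
  rcases le_total 0 t with ht | ht
  · rw [abs_of_nonneg ht]
    exact Real.rpow_le_rpow hxy.le ((div_le_iff₀ hy).mpr h2) ht
  · rw [abs_of_nonpos ht, Real.rpow_neg hK.le, ← Real.inv_rpow hK.le]
    refine Real.rpow_le_rpow_of_nonpos (inv_pos.mpr hK) ?_ ht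
    rwa [le_div_iff₀ hy, inv_mul_le_iff₀ hK]

lemma volConst_pos (n : ℕ) (ht : -1 < t) : 0 < volConst n t := by
  have : (0 : ℝ) ≤ n := n.cast_nonneg
  exact div_pos (Real.Gamma_pos_of_pos (by linarith))
    (mul_pos (by positivity) (Real.Gamma_pos_of_pos (by linarith)))

lemma wMeas_eq_smul_withDensity (n : ℕ) (t : ℝ) :
    wMeas n t = (volume (ball (0 : En n) 1))⁻¹ • (volume.restrict (ball 0 1)).withDensity
      fun z : En n => ENNReal.ofReal (volConst n t * (1 - ‖z‖ ^ 2) ^ t) := by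
  rw [wMeas, vMeas, withDensity_smul_measure]

lemma ae_wMeas_mem_unitBall (n : ℕ) (t : ℝ) : ∀ᵐ z ∂wMeas n t, z ∈ unitBall n := by
  refine (withDensity_absolutelyContinuous _ _).ae_le ?_
  exact Measure.smul_absolutelyContinuous.ae_le (ae_restrict_mem measurableSet_ball)

lemma exists_wMeas_carlesonRegion_le (n : ℕ) [NeZero n] (ht : -1 < t) :
    ∃ C > (0 : ℝ), ∀ w : En n, ‖w‖ ≤ 1 → ∀ s > 0,
      wMeas n t (carlesonRegion w s) ≤ ENNReal.ofReal (C * s ^ (n + 1 + t)) := by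
  obtain ⟨C, hC, hreg⟩ := exists_lintegral_carlesonRegion_le n ht
  have hc := volConst_pos n ht
  have hV : (volume (ball (0 : En n) 1))⁻¹ ≠ ∞ :=
    ENNReal.inv_ne_top.mpr (measure_ball_pos _ _ one_pos).ne'
  have hV0 : 0 < (volume (ball (0 : En n) 1))⁻¹.toReal :=
    ENNReal.toReal_pos (ENNReal.inv_ne_zero.mpr measure_ball_lt_top.ne) hV
  refine ⟨(volume (ball (0 : En n) 1))⁻¹.toReal * (volConst n t * 2 ^ |t| * C), by positivity,
    fun w hw s hs => ?_⟩
  rw [wMeas_eq_smul_withDensity, Measure.smul_apply, smul_eq_mul,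
    withDensity_apply _ (isOpen_carlesonRegion w s).measurableSet, mul_assoc,
    ENNReal.ofReal_mul ENNReal.toReal_nonneg, ENNReal.ofReal_toReal hV]
  gcongr
  calc _ ≤ ∫⁻ z in carlesonRegion w s,
          ENNReal.ofReal (volConst n t * 2 ^ |t|) * ENNReal.ofReal ((1 - ‖z‖) ^ t) := by
        refine (lintegral_mono' (Measure.restrict_mono_measure Measure.restrict_le_self _)
          le_rfl).trans (setLIntegral_mono' (isOpen_carlesonRegion w s).measurableSet
            fun z hz => ?_)
        rw [← ENNReal.ofReal_mul (by positivity), mul_assoc]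
        gcongr
        apply rpow_le_rpow_abs_mul two_pos <;> nlinarith [hz.1, norm_nonneg z]
    _ ≤ ENNReal.ofReal (volConst n t * 2 ^ |t|) * ENNReal.ofReal (C * s ^ (n + 1 + t)) := by
        rw [lintegral_const_mul _ (by fun_prop)]
        gcongr
        exact hreg w hw s hs
    _ = _ := by rw [← ENNReal.ofReal_mul (by positivity), mul_assoc (volConst n t * 2 ^ |t|)]

lemma exists_lintegral_norm_one_sub_inner_rpow_le (n : ℕ) [NeZero n] {c : ℝ} (ht : -1 < t)
    (hc : 0 < c) : ∃ C > (0 : ℝ), ∀ w : En n, ‖w‖ < 1 →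
      ∫⁻ z, ENNReal.ofReal (‖1 - ⟪w, z⟫_ℂ‖ ^ (-(n + 1 + t + c))) ∂wMeas n t ≤
        ENNReal.ofReal (C * (1 - ‖w‖ ^ 2) ^ (-c)) := by
  obtain ⟨C, hC, hreg⟩ := exists_wMeas_carlesonRegion_le n ht
  have hd : 0 < n + 1 + t + c := by
    have : (0 : ℝ) ≤ n := n.cast_nonneg
    linarith
  refine ⟨(n + 1 + t + c) * C / c * 2 ^ |-c|, by positivity, fun w hw => ?_⟩
  refine (lintegral_rpow_neg_le (wMeas n t) (by fun_prop) (C := C) (ρ := 1 - ‖w‖) (by linarith) hc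
    hd ((ae_wMeas_mem_unitBall n t).mono fun z hz => ?_) fun s hs => ?_).trans ?_
  · rw [norm_one_sub_inner_comm]
    exact one_sub_norm_le_norm_one_sub_inner (mem_ball_zero_iff.mp hz).le
  · refine le_trans (measure_mono_ae ?_) (hreg w hw.le s hs)
    exact (ae_wMeas_mem_unitBall n t).mono fun z hz h => ⟨mem_ball_zero_iff.mp hz, h⟩
  · rw [mul_assoc]
    gcongr
    apply rpow_le_rpow_abs_mul two_pos (one_sub_norm_sq_pos hw) <;> nlinarith [norm_nonneg w]

end WeightedVolume

end ForelliRudin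

section SeparatedSequences

variable {n : ℕ} {t : ℝ}

lemma one_sub_norm_sq_rpow_le_of_mem_bergmanBall {a z : En n} {R : ℝ} (ha : ‖a‖ < 1)
    (hz : z ∈ bergmanBall a R) (t : ℝ) :
    (1 - ‖a‖ ^ 2) ^ t ≤ Real.exp (2 * R) ^ |t| * (1 - ‖z‖ ^ 2) ^ t := by
  have hz1 := mem_ball_zero_iff.mp hz.1
  exact rpow_le_rpow_abs_mul (Real.exp_pos _) (one_sub_norm_sq_pos hz1)
    (one_sub_norm_sq_le_of_dist_lt ha hz1 (bergmanDist_comm ha hz1 ▸ hz.2))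
    (one_sub_norm_sq_le_of_dist_lt hz1 ha hz.2) t

lemma norm_one_sub_inner_rpow_neg_le_of_mem_bergmanBall {a w z : En n} {R b : ℝ} (hw : ‖w‖ < 1)
    (ha : ‖a‖ < 1) (hz : z ∈ bergmanBall a R) (hb : 0 ≤ b) :
    ‖1 - ⟪w, a⟫_ℂ‖ ^ (-b) ≤ Real.exp (2 * R) ^ b * ‖1 - ⟪w, z⟫_ℂ‖ ^ (-b) := by
  have hz1 := mem_ball_zero_iff.mp hz.1
  have hwz : 0 < ‖1 - ⟪w, z⟫_ℂ‖ := norm_pos_iff.mpr (one_sub_inner_ne_zero hw hz1)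
  have h := Real.rpow_le_rpow_of_nonpos hwz
    (norm_one_sub_inner_le_of_dist_lt hw hz1 ha hz.2) (neg_nonpos.mpr hb)
  rwa [Real.mul_rpow (Real.exp_pos _).le (norm_nonneg _), Real.rpow_neg (Real.exp_pos _).le,
    inv_mul_le_iff₀ (by positivity)] at h

lemma exists_le_wMeas_bergmanBall (n : ℕ) [NeZero n] {R : ℝ} (hR : 0 < R) (ht : -1 < t) :
    ∃ c > (0 : ℝ), ∀ a : En n, ‖a‖ < 1 →
      ENNReal.ofReal (c * (1 - ‖a‖ ^ 2) ^ (n + 1 + t)) ≤ wMeas n t (bergmanBall a R) := by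
  obtain ⟨c, hc, hvol⟩ := exists_le_volume_bergmanBall n hR
  have hγ := volConst_pos n ht
  set V := (volume (ball (0 : En n) 1)).toReal
  have hV : 0 < V :=
    ENNReal.toReal_pos (measure_ball_pos _ _ one_pos).ne' measure_ball_lt_top.ne
  set K := Real.exp (2 * R) ^ |t|
  have hK0 : 0 < K := by positivity
  refine ⟨V⁻¹ * (volConst n t / K * c), by positivity, fun a ha => ?_⟩
  have hρ := one_sub_norm_sq_pos ha
  have hball : bergmanBall a R ⊆ ball 0 1 := fun z hz => hz.1
  have hmeas := (isOpen_bergmanBall ha hR.le).measurableSet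
  rw [wMeas_eq_smul_withDensity, Measure.smul_apply, smul_eq_mul, withDensity_apply _ hmeas,
    Measure.restrict_restrict_of_subset hball,
    ← ENNReal.ofReal_toReal (measure_ball_lt_top (x := (0 : En n)) (r := 1)).ne,
    ← ENNReal.ofReal_inv_of_pos hV, mul_assoc, ENNReal.ofReal_mul (by positivity)]
  gcongr
  calc ENNReal.ofReal (volConst n t / K * c * (1 - ‖a‖ ^ 2) ^ (n + 1 + t))
      = ENNReal.ofReal (volConst n t / K * (1 - ‖a‖ ^ 2) ^ t) *
          ENNReal.ofReal (c * (1 - ‖a‖ ^ 2) ^ (n + 1)) := by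
        rw [← ENNReal.ofReal_mul (by positivity), add_comm ((n : ℝ) + 1), Real.rpow_add hρ,
          ← Nat.cast_add_one, Real.rpow_natCast]
        congr 1
        ring
    _ ≤ ENNReal.ofReal (volConst n t / K * (1 - ‖a‖ ^ 2) ^ t) * volume (bergmanBall a R) := by
        gcongr
        exact hvol a ha
    _ ≤ ∫⁻ z in bergmanBall a R, ENNReal.ofReal (volConst n t * (1 - ‖z‖ ^ 2) ^ t) := by
        rw [← setLIntegral_const]
        refine setLIntegral_mono' hmeas fun z hz => ENNReal.ofReal_le_ofReal ?_
        rw [div_mul_eq_mul_div, div_le_iff₀ hK0, mul_assoc, mul_comm _ K]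
        gcongr
        exact one_sub_norm_sq_rpow_le_of_mem_bergmanBall ha hz t

variable {a : ℕ → En n} {ε : ℝ}

lemma norm_lt_one_of_isSeparated (h : IsSeparated a ε) (k : ℕ) : ‖a k‖ < 1 :=
  mem_ball_zero_iff.mp (h.1 k)

lemma pairwise_disjoint_bergmanBall_of_isSeparated (h : IsSeparated a ε) :
    Pairwise (Function.onFun Disjoint fun k => bergmanBall (a k) (ε / 2)) := by
  intro i j hij
  refine Set.disjoint_left.mpr fun z hi hj => ?_
  have hz := mem_ball_zero_iff.mp hi.1
  have haj := norm_lt_one_of_isSeparated h j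
  have htri := bergmanDist_triangle (norm_lt_one_of_isSeparated h i) haj hz
  rw [bergmanDist_comm hz haj] at htri
  linarith [h.2 i j hij, hi.2, hj.2]

lemma exists_mul_norm_rpow_le_setLIntegral (n : ℕ) [NeZero n] {R b : ℝ} (hR : 0 < R)
    (ht : -1 < t) (hb : 0 ≤ b) : ∃ C > (0 : ℝ), ∀ w a : En n, ‖w‖ < 1 → ‖a‖ < 1 →
      ENNReal.ofReal ((1 - ‖a‖ ^ 2) ^ (n + 1 + t) * ‖1 - ⟪w, a⟫_ℂ‖ ^ (-b)) ≤
        ENNReal.ofReal C *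
          ∫⁻ z in bergmanBall a R, ENNReal.ofReal (‖1 - ⟪w, z⟫_ℂ‖ ^ (-b)) ∂wMeas n t := by
  obtain ⟨c, hc, hball⟩ := exists_le_wMeas_bergmanBall n hR ht
  refine ⟨Real.exp (2 * R) ^ b / c, by positivity, fun w a hw ha => ?_⟩
  have hρ := one_sub_norm_sq_pos ha
  calc _ = ENNReal.ofReal (‖1 - ⟪w, a⟫_ℂ‖ ^ (-b) / c) *
          ENNReal.ofReal (c * (1 - ‖a‖ ^ 2) ^ (n + 1 + t)) := by
        rw [← ENNReal.ofReal_mul (by positivity)]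
        congr 1
        field_simp
    _ ≤ ∫⁻ _ in bergmanBall a R, ENNReal.ofReal (‖1 - ⟪w, a⟫_ℂ‖ ^ (-b) / c) ∂wMeas n t := by
        rw [setLIntegral_const]
        gcongr
        exact hball a ha
    _ ≤ ∫⁻ z in bergmanBall a R, ENNReal.ofReal (Real.exp (2 * R) ^ b / c) *
          ENNReal.ofReal (‖1 - ⟪w, z⟫_ℂ‖ ^ (-b)) ∂wMeas n t := by
        refine setLIntegral_mono' (isOpen_bergmanBall ha hR.le).measurableSet fun z hz => ?_
        rw [← ENNReal.ofReal_mul (by positivity), div_mul_eq_mul_div]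
        gcongr
        exact norm_one_sub_inner_rpow_neg_le_of_mem_bergmanBall hw ha hz hb
    _ = _ := lintegral_const_mul _ (by fun_prop)

lemma exists_sum_mul_norm_one_sub_inner_rpow_le (n : ℕ) [NeZero n] {γ : ℝ} (hε : 0 < ε)
    (hγ : 0 < γ) (ht : -1 < t) : ∃ C > (0 : ℝ), ∀ a : ℕ → En n, IsSeparated a ε →
      ∀ (F : Finset ℕ) (w : En n), ‖w‖ < 1 →
        ∑ k ∈ F, (1 - ‖a k‖ ^ 2) ^ (n + 1 + t) * ‖1 - ⟪w, a k⟫_ℂ‖ ^ (-(n + 1 + t + γ)) ≤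
          C * (1 - ‖w‖ ^ 2) ^ (-γ) := by
  have hb : 0 ≤ n + 1 + t + γ := by
    have : (0 : ℝ) ≤ n := n.cast_nonneg
    linarith
  obtain ⟨D, hD, hterm⟩ := exists_mul_norm_rpow_le_setLIntegral n (half_pos hε) ht hb
  obtain ⟨C, hC, hFR⟩ := exists_lintegral_norm_one_sub_inner_rpow_le n ht hγ
  refine ⟨D * C, by positivity, fun a ha F w hw => ?_⟩
  have hak := norm_lt_one_of_isSeparated ha
  have hw0 := one_sub_norm_sq_pos hw
  rw [← ENNReal.ofReal_le_ofReal_iff (by positivity), ENNReal.ofReal_sum_of_nonneg fun k _ => by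
    have := one_sub_norm_sq_pos (hak k); positivity]
  calc _ ≤ ∑ k ∈ F, ENNReal.ofReal D * ∫⁻ z in bergmanBall (a k) (ε / 2),
          ENNReal.ofReal (‖1 - ⟪w, z⟫_ℂ‖ ^ (-(n + 1 + t + γ))) ∂wMeas n t :=
        Finset.sum_le_sum fun k _ => hterm w (a k) hw (hak k)
    _ = ENNReal.ofReal D * ∫⁻ z in ⋃ k ∈ F, bergmanBall (a k) (ε / 2),
          ENNReal.ofReal (‖1 - ⟪w, z⟫_ℂ‖ ^ (-(n + 1 + t + γ))) ∂wMeas n t := by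
        rw [← Finset.mul_sum, lintegral_biUnion_finset
          (fun i _ j _ hij => pairwise_disjoint_bergmanBall_of_isSeparated ha hij)
          fun k _ => (isOpen_bergmanBall (hak k) (half_pos hε).le).measurableSet]
    _ ≤ ENNReal.ofReal D * ENNReal.ofReal (C * (1 - ‖w‖ ^ 2) ^ (-γ)) := by
        gcongr
        exact (setLIntegral_le_lintegral _ _).trans (hFR w hw)
    _ = _ := by rw [← ENNReal.ofReal_mul hD.le, mul_assoc]

lemma one_sub_norm_sq_rpow_neg_le_of_mem_bergmanBall {w z : En n} {R γ : ℝ} (hw : ‖w‖ < 1)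
    (hz : z ∈ bergmanBall w R) {s : ℝ} (hs : 0 ≤ s) (hγ : 0 ≤ γ) :
    (1 - ‖z‖ ^ 2) ^ (-γ) ≤ Real.exp (2 * R) ^ s * Real.exp (2 * R) ^ (s + γ) *
      ((1 - ‖w‖ ^ 2) ^ s * ‖1 - ⟪z, w⟫_ℂ‖ ^ (-(s + γ))) := by
  have hz1 := mem_ball_zero_iff.mp hz.1
  have hρz := one_sub_norm_sq_pos hz1
  have hρw := one_sub_norm_sq_pos hw
  have hwz : w ∈ bergmanBall z R := ⟨mem_ball_zero_iff.mpr hw, bergmanDist_comm hw hz1 ▸ hz.2⟩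
  calc (1 - ‖z‖ ^ 2) ^ (-γ) = (1 - ‖z‖ ^ 2) ^ s * ‖1 - ⟪z, z⟫_ℂ‖ ^ (-(s + γ)) := by
        rw [norm_one_sub_inner_self hz1.le, ← Real.rpow_add hρz]
        ring_nf
    _ ≤ (Real.exp (2 * R) ^ |s| * (1 - ‖w‖ ^ 2) ^ s) *
          (Real.exp (2 * R) ^ (s + γ) * ‖1 - ⟪z, w⟫_ℂ‖ ^ (-(s + γ))) :=
        mul_le_mul (one_sub_norm_sq_rpow_le_of_mem_bergmanBall hz1 hwz s)
          (norm_one_sub_inner_rpow_neg_le_of_mem_bergmanBall hz1 hz1 hwz (by positivity))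
          (by positivity) (by positivity)
    _ = _ := by rw [abs_of_nonneg hs]; ring

/- Every centre within distance `δ` of `z` contributes at least a fixed multiple of
`(1 - |z|²)⁻¹` to the kernel sum at `w = z`. -/
open scoped Classical in
lemma exists_card_bergmanBall_le (n : ℕ) [NeZero n] (hε : 0 < ε) (δ : ℝ) :
    ∃ N > (0 : ℝ), ∀ a : ℕ → En n, IsSeparated a ε → ∀ (F : Finset ℕ) (z : En n),
      (({k ∈ F | z ∈ bergmanBall (a k) δ}).card : ℝ) ≤ N := by
  obtain ⟨C, hC, hsum⟩ := exists_sum_mul_norm_one_sub_inner_rpow_le n hε one_pos (t := 0) (by simp)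
  set K := Real.exp (2 * δ)
  set s : ℝ := n + 1 + 0
  have hs : 0 < s := by positivity
  refine ⟨C * (K ^ s * K ^ (s + 1)), by positivity, fun a ha F z => ?_⟩
  by_cases hz : ‖z‖ < 1
  · have hρ := one_sub_norm_sq_pos hz
    have hterm : ∀ k ∈ {k ∈ F | z ∈ bergmanBall (a k) δ}, (1 - ‖z‖ ^ 2) ^ (-1 : ℝ) ≤
        K ^ s * K ^ (s + 1) * ((1 - ‖a k‖ ^ 2) ^ s * ‖1 - ⟪z, a k⟫_ℂ‖ ^ (-(s + 1))) := fun k hk =>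
      one_sub_norm_sq_rpow_neg_le_of_mem_bergmanBall (norm_lt_one_of_isSeparated ha k)
        (Finset.mem_filter.mp hk).2 hs.le one_pos.le
    have hcard := (Finset.card_nsmul_le_sum _ _ _ hterm).trans_eq (Finset.mul_sum ..).symm
    rw [nsmul_eq_mul] at hcard
    refine le_of_mul_le_mul_right (hcard.trans ?_) (Real.rpow_pos_of_pos hρ (-1))
    rw [mul_comm C, mul_assoc (K ^ s * _)]
    gcongr
    exact hsum a ha _ z hz
  · rw [Finset.filter_false_of_mem fun k _ hk => hz (mem_ball_zero_iff.mp hk.1)]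
    simpa using by positivity

end SeparatedSequences

section Summing

variable {X Y : Type*} [NormedAddCommGroup X] [NormedSpace ℂ X] [NormedAddCommGroup Y]
  {ι : Type*} {r s p q t K C : ℝ}

/-- The weak `ℓ^s` norm of the family `x i`, `i ∈ F`, is at most `K`. Stating the bound without
the supremum spares the finiteness of the latter. -/
def WeakSumLE (s : ℝ) (F : Finset ι) (x : ι → X) (K : ℝ) : Prop :=
  ∀ φ : X →L[ℂ] ℂ, ‖φ‖ ≤ 1 → ∑ i ∈ F, ‖φ (x i)‖ ^ s ≤ K ^ s

/-- The `r`-summing inequality with constant `C`, for finite families indexed by any type. -/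
def SummingIneq (r : ℝ) (T : X → Y) (C : ℝ) : Prop :=
  ∀ (ι : Type) (F : Finset ι) (x : ι → X) (K : ℝ), 0 ≤ K → WeakSumLE r F x K →
    ∑ i ∈ F, ‖T (x i)‖ ^ r ≤ (C * K) ^ r

lemma WeakSumLE.subtype {F : Finset ι} {x : ι → X} (h : WeakSumLE s F x K) :
    WeakSumLE s Finset.univ (fun i : F => x i) K :=
  fun φ hφ => (Finset.sum_coe_sort F fun i => ‖φ (x i)‖ ^ s).trans_le (h φ hφ)

lemma SummingBoundWith.summingIneq {T : X → Y} (h : SummingBoundWith r r T C) (hr : 0 < r)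
    (hC : 0 ≤ C) : SummingIneq r T C := by
  intro ι F x K hK hx
  have hsum (g : ι → ℝ) : ∑ k, g (F.equivFin.symm k) = ∑ i ∈ F, g i :=
    (Equiv.sum_comp F.equivFin.symm fun i : F => g i).trans (F.sum_coe_sort g)
  have hweak : ⨆ φ : {φ : X →L[ℂ] ℂ // ‖φ‖ ≤ 1},
      (∑ k, ‖φ.1 (x (F.equivFin.symm k))‖ ^ r) ^ (1 / r) ≤ K := by
    refine Real.iSup_le (fun φ => ?_) hK
    rw [one_div, Real.rpow_inv_le_iff_of_pos (by positivity) hK hr, hsum fun i => ‖φ.1 (x i)‖ ^ r]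
    exact hx φ.1 φ.2
  have := (h F.card fun k => x (F.equivFin.symm k)).trans (mul_le_mul_of_nonneg_left hweak hC)
  rwa [one_div, Real.rpow_inv_le_iff_of_pos (by positivity) (by positivity) hr,
    hsum fun i => ‖T (x i)‖ ^ r] at this

lemma norm_ofReal_smul_rpow {E : Type*} [SeminormedAddCommGroup E] [NormedSpace ℂ E] {l : ℝ}
    (hl : 0 ≤ l) (x : E) (s : ℝ) : ‖(l : ℂ) • x‖ ^ s = l ^ s * ‖x‖ ^ s := by
  rw [norm_smul, Complex.norm_real, Real.norm_of_nonneg hl, Real.mul_rpow hl (norm_nonneg x)]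

lemma WeakSumLE.smul {F : Finset ι} {x : ι → X} {l : ι → ℝ} (hs : 0 < s) (hst : s < t)
    (hl : ∀ i, 0 ≤ l i) (hK : 0 ≤ K) (hx : WeakSumLE t F x K) :
    WeakSumLE s F (fun i => (l i : ℂ) • x i)
      ((∑ i ∈ F, l i ^ (s * t / (t - s))) ^ ((t - s) / (s * t)) * K) := by
  intro φ hφ
  have hts : 0 < t - s := sub_pos.mpr hst
  have ht : 0 < t := hs.trans hst
  have hpq : (t / (t - s)).HolderConjugate (t / s) :=
    Real.holderConjugate_iff.mpr ⟨by rw [one_lt_div hts]; linarith, by field_simp; ring⟩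
  have hL : 0 ≤ ∑ i ∈ F, l i ^ (s * t / (t - s)) :=
    Finset.sum_nonneg fun i _ => Real.rpow_nonneg (hl i) _
  calc ∑ i ∈ F, ‖φ ((l i : ℂ) • x i)‖ ^ s = ∑ i ∈ F, l i ^ s * ‖φ (x i)‖ ^ s := by
        simp only [map_smul, norm_ofReal_smul_rpow (hl _)]
    _ ≤ (∑ i ∈ F, (l i ^ s) ^ (t / (t - s))) ^ (1 / (t / (t - s))) *
          (∑ i ∈ F, (‖φ (x i)‖ ^ s) ^ (t / s)) ^ (1 / (t / s)) :=
        Real.inner_le_Lp_mul_Lq_of_nonneg F hpq (fun i _ => Real.rpow_nonneg (hl i) _)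
          fun i _ => by positivity
    _ = (∑ i ∈ F, l i ^ (s * t / (t - s))) ^ ((t - s) / t) *
          (∑ i ∈ F, ‖φ (x i)‖ ^ t) ^ (s / t) := by
        simp only [← Real.rpow_mul (hl _), ← Real.rpow_mul (norm_nonneg _), one_div_div,
          mul_div_cancel₀ _ hs.ne', mul_div_assoc]
    _ ≤ (∑ i ∈ F, l i ^ (s * t / (t - s))) ^ ((t - s) / t) * (K ^ t) ^ (s / t) := by
        gcongr
        exact hx φ hφ
    _ = _ := by
        rw [Real.mul_rpow (by positivity) hK, ← Real.rpow_mul hL, ← Real.rpow_mul hK]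
        congr 2 <;> field_simp

/- The inequality for the exponent `r` is applied to the family `‖T xᵢ‖ ^ ((s - r) / r) • xᵢ`. -/
lemma SummingIneq.mono_exponent [NormedSpace ℂ Y] {T : X →ₗ[ℂ] Y} (h : SummingIneq r T C)
    (hr : 0 < r) (hrs : r ≤ s) (hC : 0 ≤ C) : SummingIneq s T C := by
  rcases hrs.eq_or_lt with rfl | hlt
  · exact h
  intro ι F x K hK hx
  have hsr : 0 < s - r := sub_pos.mpr hlt
  have hs : 0 < s := hr.trans hlt
  set S := ∑ i ∈ F, ‖T (x i)‖ ^ s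
  have hS : 0 ≤ S := by positivity
  rcases hS.eq_or_lt with hS' | hSpos
  · rw [← hS']; positivity
  set l : ι → ℝ := fun i => ‖T (x i)‖ ^ ((s - r) / r) with hl
  have hl0 (i) : 0 ≤ l i := by positivity
  have hweak := hx.smul hr hlt hl0 hK
  have hlS : ∑ i ∈ F, l i ^ (r * s / (s - r)) = S := Finset.sum_congr rfl fun i _ => by
    rw [← Real.rpow_mul (norm_nonneg _)]
    congr 1
    field_simp
  have hTS : ∑ i ∈ F, ‖T ((l i : ℂ) • x i)‖ ^ r = S := Finset.sum_congr rfl fun i _ => by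
    rw [map_smul, norm_ofReal_smul_rpow (hl0 i), hl, ← Real.rpow_mul (norm_nonneg _),
      div_mul_cancel₀ _ hr.ne', ← Real.rpow_add_of_nonneg (norm_nonneg _) hsr.le hr.le,
      sub_add_cancel]
  rw [hlS] at hweak
  have key := h ι F _ _ (by positivity) hweak
  rw [hTS, mul_left_comm, ← Real.rpow_inv_le_iff_of_pos hS (by positivity) hr] at key
  have hsplit : S ^ r⁻¹ = S ^ ((s - r) / (r * s)) * S ^ s⁻¹ := by
    rw [← Real.rpow_add hSpos]
    congr 1
    field_simp
    ring
  rw [hsplit] at key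
  exact (Real.rpow_inv_le_iff_of_pos hS (by positivity) hs).mp
    (le_of_mul_le_mul_left key (by positivity))

/-- The family `G` satisfies an upper `p`-estimate with constant `K`: it is the image of the unit
vectors of `ℓ^p` under an operator of norm at most `K`. -/
def HasUpperEstimate (p K : ℝ) (G : ι → X) : Prop :=
  ∀ (F : Finset ι) (c : ι → ℂ), ‖∑ i ∈ F, c i • G i‖ ≤ K * (∑ i ∈ F, ‖c i‖ ^ p) ^ (1 / p)

namespace HasUpperEstimate

variable {G : ι → X} {φ : X →L[ℂ] ℂ} {F : Finset ι}

lemma mono {K' : ℝ} (hG : HasUpperEstimate p K G) (hK : K ≤ K') : HasUpperEstimate p K' G :=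
  fun F c => (hG F c).trans (by gcongr)

lemma sum_mul_norm_apply_le (hG : HasUpperEstimate p K G) (hφ : ‖φ‖ ≤ 1) (F : Finset ι)
    (w : ι → ℝ≥0) : ∑ i ∈ F, w i * ‖φ (G i)‖ ≤ K * (∑ i ∈ F, (w i : ℝ) ^ p) ^ (1 / p) := by
  have hphase (z : ℂ) : ∃ u : ℂ, ‖u‖ = 1 ∧ u * z = ‖z‖ := by
    obtain rfl | hz := eq_or_ne z 0
    · exact ⟨1, by simp⟩
    · have hz' : (‖z‖ : ℂ) ≠ 0 := by simpa using hz
      refine ⟨conj z / ‖z‖, by simp [hz], ?_⟩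
      rw [div_mul_eq_mul_div, Complex.conj_mul', sq, mul_div_cancel_right₀ _ hz']
  choose u hu hmul using fun i => hphase (φ (G i))
  have hφG : φ (∑ i ∈ F, ((w i : ℂ) * u i) • G i) = ((∑ i ∈ F, w i * ‖φ (G i)‖ : ℝ) : ℂ) := by
    simp only [map_sum, map_smul, smul_eq_mul, mul_assoc, hmul]
    push_cast
    rfl
  calc ∑ i ∈ F, w i * ‖φ (G i)‖ = ‖φ (∑ i ∈ F, ((w i : ℂ) * u i) • G i)‖ := by
        rw [hφG, Complex.norm_real, Real.norm_of_nonneg (by positivity)]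
    _ ≤ 1 * ‖∑ i ∈ F, ((w i : ℂ) * u i) • G i‖ := φ.le_of_opNorm_le hφ _
    _ ≤ K * (∑ i ∈ F, ‖(w i : ℂ) * u i‖ ^ p) ^ (1 / p) := (one_mul _).trans_le (hG F _)
    _ = _ := by simp [hu]

lemma norm_apply_le (hG : HasUpperEstimate p K G) (hφ : ‖φ‖ ≤ 1) (i : ι) : ‖φ (G i)‖ ≤ K := by
  simpa using hG.sum_mul_norm_apply_le hφ {i} fun _ => 1

lemma weakSumLE_conjExponent (hG : HasUpperEstimate p K G) (hpq : p.HolderConjugate q)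
    (hK : 0 ≤ K) (F : Finset ι) : WeakSumLE q F G K := by
  intro φ hφ
  obtain ⟨w, hw, hw'⟩ := (NNReal.isGreatest_Lp F (fun i => ‖φ (G i)‖₊) hpq.symm).1
  rw [← Real.rpow_inv_le_iff_of_pos (by positivity) hK hpq.symm.pos, ← one_div]
  calc (∑ i ∈ F, ‖φ (G i)‖ ^ q) ^ (1 / q) = ∑ i ∈ F, w i * ‖φ (G i)‖ := by
        simpa [mul_comm] using congr_arg NNReal.toReal hw'.symm
    _ ≤ K * (∑ i ∈ F, (w i : ℝ) ^ p) ^ (1 / p) := hG.sum_mul_norm_apply_le hφ F w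
    _ ≤ K * 1 := by
        gcongr
        exact Real.rpow_le_one (by positivity) (by exact_mod_cast hw) hpq.one_div_nonneg
    _ = K := mul_one K

lemma weakSumLE (hG : HasUpperEstimate p K G) (hp : 1 < p) (hs : p / (p - 1) ≤ s) (hK : 0 ≤ K)
    (F : Finset ι) : WeakSumLE s F G K := by
  intro φ hφ
  have hpq := Real.HolderConjugate.conjExponent hp
  set q := p.conjExponent
  have hq : 0 < q := hpq.symm.pos
  have hqs : 0 ≤ s - q := sub_nonneg.mpr hs
  calc ∑ i ∈ F, ‖φ (G i)‖ ^ s = ∑ i ∈ F, ‖φ (G i)‖ ^ q * ‖φ (G i)‖ ^ (s - q) := by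
        simp only [← Real.rpow_add_of_nonneg (norm_nonneg _) hq.le hqs, add_sub_cancel]
    _ ≤ (∑ i ∈ F, ‖φ (G i)‖ ^ q) * K ^ (s - q) := by
        rw [Finset.sum_mul]
        gcongr with i
        exact hG.norm_apply_le hφ i
    _ ≤ K ^ q * K ^ (s - q) := by
        gcongr
        exact hG.weakSumLE_conjExponent hpq hK F φ hφ
    _ = K ^ s := by rw [← Real.rpow_add_of_nonneg hK hq.le hqs, add_sub_cancel]

lemma weakSumLE_two_smul (hG : HasUpperEstimate p K G) (hp : 1 ≤ p) (hp2 : p < 2) (hK : 0 ≤ K)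
    {l : ι → ℝ} (hl : ∀ i, 0 ≤ l i) (hl1 : ∑ i ∈ F, l i ^ (2 * p / (2 - p)) ≤ 1) :
    WeakSumLE 2 F (fun i => (l i : ℂ) • G i) K := by
  intro φ hφ
  rcases hp.eq_or_lt with rfl | hp
  · calc ∑ i ∈ F, ‖φ ((l i : ℂ) • G i)‖ ^ (2 : ℝ)
        = ∑ i ∈ F, l i ^ (2 : ℝ) * ‖φ (G i)‖ ^ (2 : ℝ) := by
          simp only [map_smul, norm_ofReal_smul_rpow (hl _)]
      _ ≤ (∑ i ∈ F, l i ^ (2 : ℝ)) * K ^ (2 : ℝ) := by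
          rw [Finset.sum_mul]
          gcongr with i
          · exact Real.rpow_nonneg (hl i) _
          · exact hG.norm_apply_le hφ i
      _ ≤ 1 * K ^ (2 : ℝ) := by
          gcongr
          rwa [show (2 * 1 / (2 - 1) : ℝ) = 2 by norm_num] at hl1
      _ = K ^ (2 : ℝ) := one_mul _
  · have hp1 : 0 < p - 1 := sub_pos.mpr hp
    have h2 : 2 < p / (p - 1) := by rw [lt_div_iff₀ hp1]; linarith
    refine ((hG.weakSumLE hp le_rfl hK F).smul two_pos h2 hl hK φ hφ).trans ?_
    have hexp : 2 * (p / (p - 1)) / (p / (p - 1) - 2) = 2 * p / (2 - p) := by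
      have : 2 - p ≠ 0 := by linarith
      have : p / (p - 1) - 2 = (2 - p) / (p - 1) := by field_simp; ring
      rw [this]
      field_simp
    rw [hexp]
    refine Real.rpow_le_rpow (mul_nonneg (Real.rpow_nonneg
      (Finset.sum_nonneg fun i _ => Real.rpow_nonneg (hl i) _) _) hK)
      (mul_le_of_le_one_left hK (Real.rpow_le_one
        (Finset.sum_nonneg fun i _ => Real.rpow_nonneg (hl i) _) hl1 ?_)) two_pos.le
    have := sub_pos.mpr h2
    positivity

end HasUpperEstimate

lemma sum_rpow_le_of_forall_weight {b : ι → ℝ≥0∞} {A : ℝ≥0} {F : Finset ι} (hq : 0 < q)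
    (hs : 0 < s) (ht : 0 < t) (hqst : 1 / q = 1 / s + 1 / t) (hb : ∀ i, b i ≠ ∞)
    (h : ∀ l : ι → ℝ≥0, ∑ i ∈ F, l i ^ s ≤ 1 → ∑ i ∈ F, (l i * b i) ^ q ≤ (A : ℝ≥0∞) ^ q) :
    ∑ i ∈ F, b i ^ t ≤ (A : ℝ≥0∞) ^ t := by
  lift b to ι → ℝ≥0 using hb
  have hpq : (t / q).HolderConjugate (s / q) := by
    have hqt : q < t := by
      rw [← one_div_lt_one_div ht hq, hqst]
      linarith [one_div_pos.mpr hs]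
    refine Real.holderConjugate_iff.mpr ⟨(one_lt_div hq).mpr hqt, ?_⟩
    field_simp at hqst ⊢
    linarith
  obtain ⟨g, hg, hgb⟩ := (NNReal.isGreatest_Lp F (fun i => b i ^ q) hpq).1
  have hl : ∑ i ∈ F, (g i ^ (1 / q)) ^ s ≤ 1 := by
    simp only [← NNReal.rpow_mul, one_div_mul_eq_div]
    exact hg
  have hbq : (∑ i ∈ F, b i ^ t) ^ (q / t) ≤ A ^ q := by
    have hweight := h (fun i => g i ^ (1 / q)) hl
    simp only [← ENNReal.coe_mul, ← ENNReal.coe_rpow_of_nonneg _ hq.le,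
      ← ENNReal.ofNNReal_finsetSum, ENNReal.coe_le_coe] at hweight
    have hgb' : (∑ i ∈ F, b i ^ t) ^ (q / t) = ∑ i ∈ F, g i * b i ^ q := by
      simpa [← NNReal.rpow_mul, mul_div_cancel₀, hq.ne', mul_comm] using hgb.symm
    simpa [NNReal.mul_rpow, ← NNReal.rpow_mul, hq.ne', hgb'] using hweight
  simp only [← ENNReal.coe_rpow_of_nonneg _ ht.le, ← ENNReal.ofNNReal_finsetSum, ENNReal.coe_le_coe]
  have := NNReal.rpow_le_rpow hbq (div_pos ht hq).le
  simpa [← NNReal.rpow_mul, mul_div_cancel₀, hq.ne', ht.ne'] using this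

end Summing

section Khinchine

lemma expect_rpow_le {α : Type*} [Fintype α] [Nonempty α] {q : ℝ} (hq : 1 ≤ q) {f : α → ℝ}
    (hf : ∀ a, 0 ≤ f a) : (𝔼 a, f a) ^ q ≤ 𝔼 a, f a ^ q := by
  have hw : ∑ _a : α, (Fintype.card α : ℝ)⁻¹ = 1 := by simp
  have h := Real.rpow_arith_mean_le_arith_mean_rpow Finset.univ _ f (fun _ _ => by positivity) hw
    (fun a _ => hf a) hq
  simpa only [Fintype.expect_eq_sum_div_card, div_eq_inv_mul, Finset.mul_sum] using h

variable {ι : Type*} [Fintype ι] {R q : ℝ}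

lemma exists_sum_sq_eq_one {c : ι → ℂ} (hc : ∑ i, ‖c i‖ ^ 2 ≠ 0) :
    ∃ d : ι → ℂ, ∑ i, ‖d i‖ ^ 2 = 1 ∧ ∀ (R : ℝ) (ω : ι → ℤˣ),
      ‖∑ i, ω i • c i‖ ^ R = (∑ i, ‖c i‖ ^ 2) ^ (R / 2) * ‖∑ i, ω i • d i‖ ^ R := by
  set S := ∑ i, ‖c i‖ ^ 2 with hS
  have hS0 : 0 < S := lt_of_le_of_ne (by positivity) hc.symm
  have hσ : 0 < √S := Real.sqrt_pos.mpr hS0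
  refine ⟨fun i => (√S)⁻¹ • c i, ?_, fun R ω => ?_⟩
  · simp only [norm_smul, mul_pow, ← Finset.mul_sum, Real.norm_of_nonneg (inv_pos.mpr hσ).le]
    rw [← hS, inv_pow, Real.sq_sqrt hS0.le, inv_mul_cancel₀ hc]
  · simp only [Units.smul_def, smul_comm _ (√S)⁻¹, ← Finset.smul_sum, norm_smul,
      Real.norm_of_nonneg (inv_pos.mpr hσ).le]
    rw [Real.mul_rpow (by positivity) (norm_nonneg _), ← mul_assoc, Real.inv_rpow hσ.le,
      Real.sqrt_eq_rpow, ← Real.rpow_mul hS0.le, one_div_mul_eq_div,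
      mul_inv_cancel₀ (by positivity), one_mul]

variable [DecidableEq ι]

lemma expect_exp_sum_sign_smul (a : ι → ℝ) :
    𝔼 ω : ι → ℤˣ, Real.exp (∑ i, ω i • a i) = ∏ i, Real.cosh (a i) := by
  have h := Finset.prod_univ_sum (fun _ : ι => (Finset.univ : Finset ℤˣ))
    fun i u => Real.exp (u • a i)
  rw [Fintype.piFinset_univ] at h
  simp_rw [Fintype.expect_eq_sum_div_card, Real.exp_sum]
  rw [← h, Fintype.card_pi, Nat.cast_prod, ← Finset.prod_div_distrib]
  refine Finset.prod_congr rfl fun i _ => ?_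
  simp [UnitsInt.univ, Real.cosh_eq, Units.smul_def]

lemma expect_exp_abs_sum_sign_smul_le (a : ι → ℝ) :
    𝔼 ω : ι → ℤˣ, Real.exp |∑ i, ω i • a i| ≤ 2 * Real.exp ((∑ i, a i ^ 2) / 2) := by
  have hcosh : ∏ i, Real.cosh (a i) ≤ Real.exp ((∑ i, a i ^ 2) / 2) := by
    rw [Finset.sum_div, Real.exp_sum]
    exact Finset.prod_le_prod (fun i _ => (Real.cosh_pos _).le)
      fun i _ => Real.cosh_le_exp_half_sq _
  have hneg := expect_exp_sum_sign_smul fun i => -a i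
  simp only [Real.cosh_neg, smul_neg, Finset.sum_neg_distrib] at hneg
  calc 𝔼 ω : ι → ℤˣ, Real.exp |∑ i, ω i • a i|
      ≤ 𝔼 ω : ι → ℤˣ, (Real.exp (∑ i, ω i • a i) + Real.exp (-∑ i, ω i • a i)) :=
        Finset.expect_le_expect fun ω _ => Real.exp_abs_le _
    _ = 2 * ∏ i, Real.cosh (a i) := by
        rw [Finset.expect_add_distrib, expect_exp_sum_sign_smul, hneg, two_mul]
    _ ≤ _ := by gcongr

lemma exp_norm_le (z : ℂ) :
    Real.exp ‖z‖ ≤ (Real.exp |2 * z.re| + Real.exp |2 * z.im|) / 2 := by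
  have hsq (x : ℝ) : Real.exp |2 * x| = Real.exp |x| ^ 2 := by
    rw [← Real.exp_nat_mul, abs_mul, abs_two]
    norm_num
  have := Real.exp_le_exp.mpr (Complex.norm_le_abs_re_add_abs_im z)
  rw [Real.exp_add] at this
  rw [hsq, hsq]
  linarith [two_mul_le_add_sq (Real.exp |z.re|) (Real.exp |z.im|)]

lemma expect_exp_norm_sum_sign_smul_le (c : ι → ℂ) :
    𝔼 ω : ι → ℤˣ, Real.exp ‖∑ i, ω i • c i‖ ≤ 2 * Real.exp (2 * ∑ i, ‖c i‖ ^ 2) := by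
  have hpart (f : ℂ →ₗ[ℝ] ℝ) (hf : ∀ z, |f z| ≤ ‖z‖) :
      𝔼 ω : ι → ℤˣ, Real.exp |2 * f (∑ i, ω i • c i)| ≤
        2 * Real.exp (2 * ∑ i, ‖c i‖ ^ 2) := by
    calc 𝔼 ω : ι → ℤˣ, Real.exp |2 * f (∑ i, ω i • c i)|
        = 𝔼 ω : ι → ℤˣ, Real.exp |∑ i, ω i • (2 * f (c i))| := by
          simp only [map_sum, Units.smul_def, map_zsmul, Finset.mul_sum, mul_smul_comm]
      _ ≤ 2 * Real.exp ((∑ i, (2 * f (c i)) ^ 2) / 2) := expect_exp_abs_sum_sign_smul_le _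
      _ ≤ _ := by
          rw [Finset.sum_div, Finset.mul_sum]
          gcongr with i
          linarith [sq_le_sq.mpr ((hf (c i)).trans_eq (abs_norm (c i)).symm), mul_pow 2 (f (c i)) 2]
  have hre := hpart Complex.reLm Complex.abs_re_le_norm
  have him := hpart Complex.imLm Complex.abs_im_le_norm
  refine (Finset.expect_le_expect fun ω _ => exp_norm_le _).trans ?_
  rw [← Finset.expect_div, Finset.expect_add_distrib]
  simp only [Complex.reLm_coe, Complex.imLm_coe] at hre him
  linarith

lemma rpow_le_factorial_mul_exp {x : ℝ} (hx : 0 ≤ x) (hR : 0 ≤ R) :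
    x ^ R ≤ (⌈R⌉₊.factorial : ℝ) * Real.exp x := by
  rcases le_total x 1 with h | h
  · have hf : (1 : ℝ) ≤ (⌈R⌉₊.factorial : ℝ) := by exact_mod_cast Nat.factorial_pos _
    exact (Real.rpow_le_one hx h hR).trans (one_le_mul_of_one_le_of_one_le hf (Real.one_le_exp hx))
  · calc x ^ R ≤ x ^ ⌈R⌉₊ := by
          rw [← Real.rpow_natCast]
          exact Real.rpow_le_rpow_of_exponent_le h (Nat.le_ceil R)
      _ ≤ _ := by
          rw [mul_comm, ← div_le_iff₀ (by positivity)]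
          exact Real.pow_div_factorial_le_exp x hx _

/-- The constant obtained in the upper Khinchine inequality with exponent `R`; no attempt is made
to optimize it. -/
def khinchineConst (R : ℝ) : ℝ := ⌈R⌉₊.factorial * (2 * Real.exp 2)

lemma khinchineConst_pos (R : ℝ) : 0 < khinchineConst R := by
  unfold khinchineConst
  positivity

lemma expect_norm_rpow_le_of_sum_sq_eq_one (hR : 0 ≤ R) {c : ι → ℂ} (hc : ∑ i, ‖c i‖ ^ 2 = 1) :
    𝔼 ω : ι → ℤˣ, ‖∑ i, ω i • c i‖ ^ R ≤ khinchineConst R := by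
  refine (Finset.expect_le_expect fun ω _ =>
    rpow_le_factorial_mul_exp (norm_nonneg _) hR).trans ?_
  rw [← Finset.mul_expect]
  refine mul_le_mul_of_nonneg_left ((expect_exp_norm_sum_sign_smul_le c).trans_eq ?_)
    (by positivity)
  rw [hc, mul_one]

lemma expect_norm_rpow_le (hR : 0 < R) (c : ι → ℂ) :
    𝔼 ω : ι → ℤˣ, ‖∑ i, ω i • c i‖ ^ R ≤ khinchineConst R * (∑ i, ‖c i‖ ^ 2) ^ (R / 2) := by
  by_cases hc : ∑ i, ‖c i‖ ^ 2 = 0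
  · have h0 (i) : c i = 0 := by
      simpa using (Finset.sum_eq_zero_iff_of_nonneg fun i _ => by positivity).mp hc i
        (Finset.mem_univ i)
    simp [h0, Real.zero_rpow hR.ne', Real.zero_rpow (half_pos hR).ne']
  · obtain ⟨d, hd, h⟩ := exists_sum_sq_eq_one hc
    simp_rw [h R, ← Finset.mul_expect, mul_comm (khinchineConst R)]
    gcongr
    exact expect_norm_rpow_le_of_sum_sq_eq_one hR.le hd

lemma expect_sign_mul_sign (i j : ι) :
    𝔼 ω : ι → ℤˣ, ((ω i : ℤ) : ℂ) * ((ω j : ℤ) : ℂ) = if i = j then 1 else 0 := by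
  split_ifs with hij
  · subst hij
    have (u : ℤˣ) : ((u : ℤ) : ℂ) * ((u : ℤ) : ℂ) = 1 := by
      rcases Int.units_eq_one_or u with rfl | rfl <;> simp
    simp only [this]
    exact Fintype.expect_const 1
  · have hflip : Function.Involutive fun ω : ι → ℤˣ => Function.update ω i (-ω i) := by
      intro ω
      simp
    have h := Fintype.expect_equiv (Function.Involutive.toPerm _ hflip)
      (fun ω : ι → ℤˣ => ((ω i : ℤ) : ℂ) * ((ω j : ℤ) : ℂ))
      (fun ω : ι → ℤˣ => -(((ω i : ℤ) : ℂ) * ((ω j : ℤ) : ℂ)))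
      fun ω => by simp [Function.update_of_ne (Ne.symm hij)]
    rw [Finset.expect_neg_distrib] at h
    exact self_eq_neg.mp h

lemma expect_norm_sq (c : ι → ℂ) :
    𝔼 ω : ι → ℤˣ, ‖∑ i, ω i • c i‖ ^ 2 = ∑ i, ‖c i‖ ^ 2 := by
  have hexpand (ω : ι → ℤˣ) : ((‖∑ i, ω i • c i‖ : ℂ)) ^ 2 =
      ∑ i, ∑ j, ((ω i : ℤ) : ℂ) * ((ω j : ℤ) : ℂ) * (conj (c i) * c j) := by
    rw [← Complex.conj_mul', map_sum, Finset.sum_mul_sum]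
    refine Finset.sum_congr rfl fun i _ => Finset.sum_congr rfl fun j _ => ?_
    simp only [Units.smul_def, zsmul_eq_mul, map_mul, map_intCast]
    ring
  have : 𝔼 ω : ι → ℤˣ, ((‖∑ i, ω i • c i‖ : ℂ)) ^ 2 = ∑ i, ((‖c i‖ : ℂ)) ^ 2 := by
    simp_rw [hexpand, Finset.expect_sum_comm, ← Finset.expect_mul, expect_sign_mul_sign, ite_mul,
      one_mul, zero_mul, Finset.sum_ite_eq, Finset.mem_univ, if_true, Complex.conj_mul']
  exact_mod_cast this

/- The second and fourth moments control the first one: `t - (4 / 27) t ^ 3 ≤ 1` for `t ≥ 0`, so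
`B⁻¹ Z² - (4 / 27) B⁻³ Z⁴ ≤ Z`. -/
lemma one_le_mul_expect_norm {c : ι → ℂ} (hc : ∑ i, ‖c i‖ ^ 2 = 1) :
    1 ≤ 2 * khinchineConst 4 * 𝔼 ω : ι → ℤˣ, ‖∑ i, ω i • c i‖ := by
  set B := khinchineConst 4 with hB
  have hB1 : 1 ≤ B := by
    have hf : (1 : ℝ) ≤ (⌈(4 : ℝ)⌉₊.factorial : ℝ) := by exact_mod_cast Nat.factorial_pos _
    have := Real.one_le_exp (show (0 : ℝ) ≤ 2 by norm_num)
    rw [hB, khinchineConst]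
    nlinarith
  have hB0 : 0 < B := by linarith
  set Z : (ι → ℤˣ) → ℝ := fun ω => ‖∑ i, ω i • c i‖
  have hZ0 (ω) : 0 ≤ Z ω := norm_nonneg _
  have h2 : 𝔼 ω, Z ω ^ 2 = 1 := (expect_norm_sq c).trans hc
  have h4 : 𝔼 ω, Z ω ^ 4 ≤ B := by
    simpa [Z] using expect_norm_rpow_le_of_sum_sq_eq_one (R := 4) (by norm_num) hc
  have hpt (ω) : B⁻¹ * Z ω ^ 2 - 4 / 27 * B⁻¹ ^ 3 * Z ω ^ 4 ≤ Z ω := by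
    have hy0 : 0 ≤ B⁻¹ * Z ω := mul_nonneg (inv_pos.mpr hB0).le (hZ0 ω)
    generalize hy : B⁻¹ * Z ω = y at hy0
    have hcubic : y - 4 / 27 * y ^ 3 ≤ 1 := by
      nlinarith [mul_nonneg (by linarith : 0 ≤ y + 3) (sq_nonneg (2 * y - 3))]
    calc B⁻¹ * Z ω ^ 2 - 4 / 27 * B⁻¹ ^ 3 * Z ω ^ 4 = Z ω * (y - 4 / 27 * y ^ 3) := by
          rw [← hy]; ring
      _ ≤ Z ω * 1 := mul_le_mul_of_nonneg_left hcubic (hZ0 ω)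
      _ = Z ω := mul_one _
  have hmean := Finset.expect_le_expect fun ω (_ : ω ∈ Finset.univ) => hpt ω
  rw [Finset.expect_sub_distrib, ← Finset.mul_expect, ← Finset.mul_expect, h2, mul_one] at hmean
  have hlast : 4 / 27 * B⁻¹ ^ 3 * 𝔼 ω, Z ω ^ 4 ≤ 4 / 27 * B⁻¹ := by
    calc 4 / 27 * B⁻¹ ^ 3 * 𝔼 ω, Z ω ^ 4 ≤ 4 / 27 * B⁻¹ ^ 3 * B := by gcongr
      _ = 4 / 27 * (B⁻¹ * B⁻¹) := by field_simp
      _ ≤ 4 / 27 * (1 * B⁻¹) := by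
          gcongr
          exact inv_le_one_of_one_le₀ hB1
      _ = _ := by rw [one_mul]
  calc (1 : ℝ) = 2 * B * (B⁻¹ / 2) := by field_simp
    _ ≤ 2 * B * 𝔼 ω, Z ω := by
        gcongr
        linarith [inv_pos.mpr hB0]

lemma sum_sq_rpow_le_mul_expect_norm_rpow (hq : 1 ≤ q) (c : ι → ℂ) :
    (∑ i, ‖c i‖ ^ 2) ^ (q / 2) ≤
      (2 * khinchineConst 4) ^ q * 𝔼 ω : ι → ℤˣ, ‖∑ i, ω i • c i‖ ^ q := by
  have hB := khinchineConst_pos 4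
  by_cases hc : ∑ i, ‖c i‖ ^ 2 = 0
  · rw [hc, Real.zero_rpow (by positivity)]
    exact mul_nonneg (by positivity) (Finset.expect_nonneg fun ω _ => by positivity)
  obtain ⟨d, hd, h⟩ := exists_sum_sq_eq_one hc
  simp_rw [h q, ← Finset.mul_expect]
  rw [mul_left_comm]
  refine le_mul_of_one_le_right (by positivity) ?_
  calc (1 : ℝ) ≤ (2 * khinchineConst 4 * 𝔼 ω : ι → ℤˣ, ‖∑ i, ω i • d i‖) ^ q :=
        Real.one_le_rpow (one_le_mul_expect_norm hd) (by linarith)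
    _ = (2 * khinchineConst 4) ^ q * (𝔼 ω : ι → ℤˣ, ‖∑ i, ω i • d i‖) ^ q :=
        Real.mul_rpow (by positivity) (Finset.expect_nonneg fun ω _ => norm_nonneg _)
    _ ≤ _ := by
        gcongr
        exact expect_rpow_le hq fun ω => norm_nonneg _

end Khinchine

section SquareFunction

variable {Ω : Type*} [MeasurableSpace Ω] {μ : Measure Ω} {q : ℝ}

lemma ae_map_sum_units_smul_eq {X : Type*} [AddCommGroup X] [Module ℂ X] {ι : Type*} [Fintype ι]
    {T : X →ₗ[ℂ] Lp ℂ (ENNReal.ofReal q) μ} {x : ι → X} {h : ι → Ω → ℂ}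
    (hTh : ∀ i, T (x i) =ᵐ[μ] h i) :
    ∀ᵐ z ∂μ, ∀ ω : ι → ℤˣ, T (∑ i, ω i • x i) z = ∑ i, ω i • h i z := by
  refine ae_all_iff.mpr fun ω => ?_
  simp only [map_sum, Units.smul_def, map_zsmul]
  have hsmul (i : ι) : (((ω i : ℤ) • T (x i) : Lp ℂ (ENNReal.ofReal q) μ) : Ω → ℂ) =ᵐ[μ]
      fun z => (ω i : ℤ) • h i z := by
    rw [← Int.cast_smul_eq_zsmul ℂ]
    filter_upwards [Lp.coeFn_smul ((ω i : ℤ) : ℂ) (T (x i)), hTh i] with z hz1 hz2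
    rw [hz1, Pi.smul_apply, hz2, Int.cast_smul_eq_zsmul]
  filter_upwards [Lp.coeFn_finsetSum Finset.univ fun i => (ω i : ℤ) • T (x i),
    ae_all_iff.mpr hsmul] with z hz1 hz2
  rw [hz1, Finset.sum_apply]
  exact Finset.sum_congr rfl fun i _ => hz2 i

variable [Fact (1 ≤ ENNReal.ofReal q)]

lemma lintegral_enorm_rpow_eq_norm_rpow (hq : 0 < q) (f : Lp ℂ (ENNReal.ofReal q) μ) :
    ∫⁻ z, ‖f z‖ₑ ^ q ∂μ = ENNReal.ofReal (‖f‖ ^ q) := by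
  have h := eLpNorm_eq_lintegral_rpow_enorm_toReal (f := f) (μ := μ)
    (ENNReal.ofReal_pos.mpr hq).ne' ENNReal.ofReal_ne_top
  rw [← Lp.enorm_def, ENNReal.toReal_ofReal hq.le] at h
  rw [← ENNReal.ofReal_rpow_of_nonneg (norm_nonneg f) hq.le, ofReal_norm, h, ← ENNReal.rpow_mul,
    one_div_mul_cancel hq.ne', ENNReal.rpow_one]

lemma lintegral_expect_norm_rpow {α : Type*} [Fintype α] (hq : 0 < q)
    (f : α → Lp ℂ (ENNReal.ofReal q) μ) :
    ∫⁻ z, ENNReal.ofReal (𝔼 a, ‖f a z‖ ^ q) ∂μ = ENNReal.ofReal (𝔼 a, ‖f a‖ ^ q) := by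
  have hexpect {g : α → ℝ} (hg : ∀ a, 0 ≤ g a) : ENNReal.ofReal (𝔼 a, g a) =
      ENNReal.ofReal (Fintype.card α : ℝ)⁻¹ * ∑ a, ENNReal.ofReal (g a) := by
    rw [Fintype.expect_eq_sum_div_card, div_eq_inv_mul, ENNReal.ofReal_mul (by positivity),
      ENNReal.ofReal_sum_of_nonneg fun a _ => hg a]
  have hpow (a z) : ENNReal.ofReal (‖f a z‖ ^ q) = ‖f a z‖ₑ ^ q := by
    rw [← ENNReal.ofReal_rpow_of_nonneg (norm_nonneg _) hq.le, ofReal_norm]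
  rw [hexpect fun _ => Real.rpow_nonneg (norm_nonneg _) q]
  simp_rw [hexpect fun _ => Real.rpow_nonneg (norm_nonneg _) q, hpow]
  rw [lintegral_const_mul' _ _ ENNReal.ofReal_ne_top,
    lintegral_finsetSum' _ fun a _ => (Lp.aestronglyMeasurable _).enorm.pow_const q]
  simp_rw [lintegral_enorm_rpow_eq_norm_rpow hq]

variable {X Y : Type*} [NormedAddCommGroup X] [NormedSpace ℂ X] [NormedAddCommGroup Y]
  {r R C M : ℝ} {ι : Type} [Fintype ι] {x : ι → X}

lemma WeakSumLE.sum_sign_smul [DecidableEq ι] (hR : 0 < R) (hM : 0 ≤ M)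
    (hx : WeakSumLE 2 Finset.univ x M) :
    WeakSumLE R Finset.univ (fun ω : ι → ℤˣ => ∑ i, ω i • x i)
      ((Fintype.card (ι → ℤˣ) * khinchineConst R) ^ (1 / R) * M) := by
  intro φ hφ
  have hB := khinchineConst_pos R
  have hsq : (∑ i, ‖φ (x i)‖ ^ 2) ^ (R / 2) ≤ M ^ R := by
    have h := Real.rpow_le_rpow (by positivity) (hx φ hφ) (half_pos hR).le
    simpa only [Real.rpow_two, ← Real.rpow_natCast_mul hM, Nat.cast_ofNat,
      mul_div_cancel₀ R two_ne_zero] using h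
  have hexpect := (expect_norm_rpow_le hR fun i => φ (x i)).trans
    (mul_le_mul_of_nonneg_left hsq hB.le)
  rw [Fintype.expect_eq_sum_div_card, div_le_iff₀' (by positivity), ← mul_assoc] at hexpect
  rw [Real.mul_rpow (by positivity) hM, ← Real.rpow_mul (by positivity),
    one_div_mul_cancel hR.ne', Real.rpow_one]
  simpa only [map_sum, Units.smul_def, map_zsmul] using hexpect

lemma SummingIneq.expect_norm_rpow_le [DecidableEq ι] {T : X → Y} (hT : SummingIneq R T C)
    (hR : 0 < R) (hC : 0 ≤ C) (hM : 0 ≤ M) (hx : WeakSumLE 2 Finset.univ x M) :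
    𝔼 ω : ι → ℤˣ, ‖T (∑ i, ω i • x i)‖ ^ R ≤ khinchineConst R * (C * M) ^ R := by
  have hB := khinchineConst_pos R
  have h := hT _ _ _ _ (by positivity) (hx.sum_sign_smul hR hM)
  rw [Fintype.expect_eq_sum_div_card, div_le_iff₀' (by positivity), ← mul_assoc]
  rwa [mul_left_comm, Real.mul_rpow (by positivity) (by positivity),
    ← Real.rpow_mul (by positivity), one_div_mul_cancel hR.ne', Real.rpow_one] at h

lemma SummingIneq.expect_norm_rpow_le_of_le [DecidableEq ι] {s : ℝ} {T : X → Y}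
    (hT : SummingIneq R T C) (hs : 0 < s) (hsR : s ≤ R) (hC : 0 ≤ C) (hM : 0 ≤ M)
    (hx : WeakSumLE 2 Finset.univ x M) :
    𝔼 ω : ι → ℤˣ, ‖T (∑ i, ω i • x i)‖ ^ s ≤ (khinchineConst R ^ (1 / R) * (C * M)) ^ s := by
  have hR : 0 < R := hs.trans_le hsR
  have hB := khinchineConst_pos R
  have hCM : 0 ≤ C * M := mul_nonneg hC hM
  have hjensen := expect_rpow_le ((one_le_div hs).mpr hsR)
    (f := fun ω : ι → ℤˣ => ‖T (∑ i, ω i • x i)‖ ^ s) fun ω => by positivity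
  simp only [← Real.rpow_mul (norm_nonneg _), mul_div_cancel₀ _ hs.ne'] at hjensen
  have h0 : 0 ≤ 𝔼 ω : ι → ℤˣ, ‖T (∑ i, ω i • x i)‖ ^ s :=
    Finset.expect_nonneg fun ω _ => by positivity
  rw [← Real.rpow_le_rpow_iff h0 (by positivity) (div_pos hR hs)]
  refine hjensen.trans ((hT.expect_norm_rpow_le hR hC hM hx).trans_eq ?_)
  rw [← Real.rpow_mul (by positivity), mul_div_cancel₀ _ hs.ne',
    Real.mul_rpow (by positivity) hCM, ← Real.rpow_mul hB.le, one_div_mul_cancel hR.ne',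
    Real.rpow_one]

/- By Khinchine's inequality the square function is an average of the functions
`|T (∑ᵢ ± xᵢ)| ^ q` over all choices of signs. -/
lemma SummingIneq.exists_lintegral_squareFunction_le (hq : 1 ≤ q) (hr : 0 < r) :
    ∃ D > (0 : ℝ), ∀ {Ω : Type*} [MeasurableSpace Ω] {μ : Measure Ω}
      {X : Type*} [NormedAddCommGroup X] [NormedSpace ℂ X]
      {T : X →ₗ[ℂ] Lp ℂ (ENNReal.ofReal q) μ} {C M : ℝ} {ι : Type} [Fintype ι] {x : ι → X}
      {h : ι → Ω → ℂ}, 0 ≤ C → 0 ≤ M → SummingIneq r T C → (∀ i, T (x i) =ᵐ[μ] h i) →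
      WeakSumLE 2 Finset.univ x M →
      ∫⁻ z, ENNReal.ofReal ((∑ i, ‖h i z‖ ^ 2) ^ (q / 2)) ∂μ ≤
        ENNReal.ofReal ((D * (C * M)) ^ q) := by
  have hq0 : 0 < q := by linarith
  set R := max r q
  have hB := khinchineConst_pos R
  have hA := khinchineConst_pos 4
  refine ⟨2 * khinchineConst 4 * khinchineConst R ^ (1 / R), by positivity, ?_⟩
  intro Ω _ μ X _ _ T C M ι _ x h hC hM hT hxh hx
  classical
  have hmean := (hT.mono_exponent hr (le_max_left r q) hC).expect_norm_rpow_le_of_le hq0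
    (le_max_right r q) hC hM hx
  calc ∫⁻ z, ENNReal.ofReal ((∑ i, ‖h i z‖ ^ 2) ^ (q / 2)) ∂μ
      ≤ ∫⁻ z, ENNReal.ofReal ((2 * khinchineConst 4) ^ q) *
          ENNReal.ofReal (𝔼 ω : ι → ℤˣ, ‖T (∑ i, ω i • x i) z‖ ^ q) ∂μ := by
        refine lintegral_mono_ae ?_
        filter_upwards [ae_map_sum_units_smul_eq hxh] with z hz
        simp_rw [hz, ← ENNReal.ofReal_mul (show 0 ≤ (2 * khinchineConst 4) ^ q by positivity)]
        exact ENNReal.ofReal_le_ofReal (sum_sq_rpow_le_mul_expect_norm_rpow hq fun i => h i z)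
    _ = ENNReal.ofReal ((2 * khinchineConst 4) ^ q) *
          ENNReal.ofReal (𝔼 ω : ι → ℤˣ, ‖T (∑ i, ω i • x i)‖ ^ q) := by
        rw [lintegral_const_mul' _ _ ENNReal.ofReal_ne_top, lintegral_expect_norm_rpow hq0]
    _ ≤ ENNReal.ofReal ((2 * khinchineConst 4) ^ q) *
          ENNReal.ofReal ((khinchineConst R ^ (1 / R) * (C * M)) ^ q) := by gcongr
    _ = _ := by
        rw [← ENNReal.ofReal_mul (by positivity),
          ← Real.mul_rpow (by positivity) (by positivity), mul_assoc, mul_assoc, mul_assoc]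

end SquareFunction

section TestFunctions

lemma lintegral_rpow_sub_mul_wMeas (n : ℕ) {s t : ℝ} (hs : -1 < s) (ht : -1 < t)
    {f : En n → ℝ≥0∞} (hf : Measurable f) :
    ∫⁻ z, ENNReal.ofReal ((1 - ‖z‖ ^ 2) ^ (t - s)) * f z ∂wMeas n s =
      ENNReal.ofReal (volConst n s / volConst n t) * ∫⁻ z, f z ∂wMeas n t := by
  have hVs := volConst_pos n hs
  have hVt := volConst_pos n ht
  simp only [wMeas_eq_smul_withDensity, lintegral_smul_measure, smul_eq_mul]
  rw [lintegral_withDensity_eq_lintegral_mul _ (by fun_prop) (by fun_prop),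
    lintegral_withDensity_eq_lintegral_mul _ (by fun_prop) hf, mul_left_comm (ENNReal.ofReal _),
    ← lintegral_const_mul' _ _ ENNReal.ofReal_ne_top]
  congr 1
  refine setLIntegral_congr_fun measurableSet_ball fun z hz => ?_
  have hρ := one_sub_norm_sq_pos (mem_ball_zero_iff.mp hz)
  simp only [Pi.mul_apply]
  rw [← mul_assoc, ← mul_assoc, ← ENNReal.ofReal_mul (by positivity),
    ← ENNReal.ofReal_mul (by positivity), mul_assoc, ← Real.rpow_add hρ, add_sub_cancel,
    ← mul_assoc, div_mul_cancel₀ _ hVt.ne']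

variable {n b : ℕ} {a z : En n}

/-- The test function `(1-|a|²)^{b-θ} / (1-⟨z,a⟩)^b` at `a`. For `θ = (n+1+α)/p` and `b` large it
has norm comparable to `1` in the Bergman space `A^p_α`. -/
def testFun (b : ℕ) (θ : ℝ) (a z : En n) : ℂ :=
  (((1 - ‖a‖ ^ 2) ^ (b - θ) : ℝ) : ℂ) / (1 - ⟪a, z⟫_ℂ) ^ b

lemma differentiableOn_testFun (b : ℕ) (θ : ℝ) (ha : ‖a‖ < 1) :
    DifferentiableOn ℂ (testFun b θ a) (unitBall n) := by
  have hdenom : Differentiable ℂ fun z : En n => (1 - ⟪a, z⟫_ℂ) ^ b :=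
    ((innerSL ℂ a).differentiable.const_sub 1).pow b
  have hinv := hdenom.differentiableOn.fun_inv (S := unitBall n) fun z hz =>
    pow_ne_zero b (one_sub_inner_ne_zero ha (mem_ball_zero_iff.mp hz))
  exact (hinv.const_mul _).congr fun z _ => by rw [testFun, div_eq_mul_inv]

lemma measurable_testFun (b : ℕ) (θ : ℝ) (a : En n) : Measurable (testFun b θ a) := by
  have h : Continuous fun z : En n => (1 - ⟪a, z⟫_ℂ) ^ b := by fun_prop
  exact measurable_const.div h.measurable

lemma norm_testFun (b : ℕ) (θ : ℝ) (ha : ‖a‖ < 1) (z : En n) :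
    ‖testFun b θ a z‖ = (1 - ‖a‖ ^ 2) ^ (b - θ) * ‖1 - ⟪a, z⟫_ℂ‖ ^ (-(b : ℝ)) := by
  have h := one_sub_norm_sq_pos ha
  rw [testFun, norm_div, norm_pow, Complex.norm_real, Real.norm_of_nonneg (by positivity),
    Real.rpow_neg (norm_nonneg _), Real.rpow_natCast, div_eq_mul_inv]

lemma rpow_neg_le_norm_testFun_of_mem_bergmanBall (b : ℕ) (θ : ℝ) {δ : ℝ} (ha : ‖a‖ < 1)
    (hz : z ∈ bergmanBall a δ) :
    (1 - ‖a‖ ^ 2) ^ (-θ) ≤ Real.exp (2 * δ) ^ b * ‖testFun b θ a z‖ := by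
  have hρ := one_sub_norm_sq_pos ha
  calc (1 - ‖a‖ ^ 2) ^ (-θ) = (1 - ‖a‖ ^ 2) ^ (b - θ) * ‖1 - ⟪a, a⟫_ℂ‖ ^ (-(b : ℝ)) := by
        rw [norm_one_sub_inner_self ha.le, ← Real.rpow_add hρ]
        ring_nf
    _ ≤ (1 - ‖a‖ ^ 2) ^ (b - θ) *
          (Real.exp (2 * δ) ^ (b : ℝ) * ‖1 - ⟪a, z⟫_ℂ‖ ^ (-(b : ℝ))) := by
        gcongr
        exact norm_one_sub_inner_rpow_neg_le_of_mem_bergmanBall ha ha hz b.cast_nonneg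
    _ = _ := by rw [norm_testFun b θ ha, Real.rpow_natCast, mul_left_comm]

lemma sum_mul_rpow_le {ι : Type*} (F : Finset ι) {p : ℝ} (hp : 1 ≤ p) {g f : ι → ℝ}
    (hg : ∀ i, 0 ≤ g i) (hf : ∀ i, 0 ≤ f i) :
    (∑ i ∈ F, g i * f i) ^ p ≤ (∑ i ∈ F, g i) ^ (p - 1) * ∑ i ∈ F, g i * f i ^ p := by
  have hp0 : 0 < p := by linarith
  have hgsum : 0 ≤ ∑ i ∈ F, g i := Finset.sum_nonneg fun i _ => hg i
  have hgfp : 0 ≤ ∑ i ∈ F, g i * f i ^ p :=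
    Finset.sum_nonneg fun i _ => mul_nonneg (hg i) (Real.rpow_nonneg (hf i) _)
  refine (Real.rpow_le_rpow (Finset.sum_nonneg fun i _ => mul_nonneg (hg i) (hf i))
    (Real.inner_le_weight_mul_Lp_of_nonneg F hp g f hg hf) hp0.le).trans_eq ?_
  rw [Real.mul_rpow (by positivity) (by positivity), ← Real.rpow_mul hgsum, ← Real.rpow_mul hgfp,
    inv_mul_cancel₀ hp0.ne', Real.rpow_one, sub_mul, one_mul, inv_mul_cancel₀ hp0.ne']

variable {p α ε γ : ℝ}

lemma norm_sum_testFun_rpow_le {ι : Type*} {a : ι → En n} {θ S : ℝ} {F : Finset ι}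
    (ha : ∀ k, ‖a k‖ < 1) (hp : 1 ≤ p)
    (hS : ∑ k ∈ F, (1 - ‖a k‖ ^ 2) ^ (b - γ) * ‖1 - ⟪a k, z⟫_ℂ‖ ^ (-(b : ℝ)) ≤ S) (c : ι → ℂ) :
    ‖∑ k ∈ F, c k * testFun b θ (a k) z‖ ^ p ≤ S ^ (p - 1) *
      ∑ k ∈ F, ‖c k‖ ^ p * (1 - ‖a k‖ ^ 2) ^ (b - γ + (γ - θ) * p) *
        ‖1 - ⟪a k, z⟫_ℂ‖ ^ (-(b : ℝ)) := by
  have hρ (k) := one_sub_norm_sq_pos (ha k)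
  set g : ι → ℝ := fun k => (1 - ‖a k‖ ^ 2) ^ (b - γ) * ‖1 - ⟪a k, z⟫_ℂ‖ ^ (-(b : ℝ))
  set f : ι → ℝ := fun k => ‖c k‖ * (1 - ‖a k‖ ^ 2) ^ (γ - θ)
  have hg0 (k) : 0 ≤ g k := by have := hρ k; positivity
  have hf0 (k) : 0 ≤ f k := by have := hρ k; positivity
  have hnorm : ‖∑ k ∈ F, c k * testFun b θ (a k) z‖ ≤ ∑ k ∈ F, g k * f k := by
    refine (norm_sum_le _ _).trans_eq (Finset.sum_congr rfl fun k _ => ?_)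
    rw [norm_mul, norm_testFun b θ (ha k), ← sub_add_sub_cancel _ γ θ, Real.rpow_add (hρ k)]
    ring
  have hterm (k) : g k * f k ^ p = ‖c k‖ ^ p * (1 - ‖a k‖ ^ 2) ^ (b - γ + (γ - θ) * p) *
      ‖1 - ⟪a k, z⟫_ℂ‖ ^ (-(b : ℝ)) := by
    rw [Real.mul_rpow (norm_nonneg _) (Real.rpow_nonneg (hρ k).le _), ← Real.rpow_mul (hρ k).le,
      Real.rpow_add (hρ k)]
    ring
  calc _ ≤ (∑ k ∈ F, g k * f k) ^ p := by gcongr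
    _ ≤ (∑ k ∈ F, g k) ^ (p - 1) * ∑ k ∈ F, g k * f k ^ p := sum_mul_rpow_le F hp hg0 hf0
    _ ≤ S ^ (p - 1) * ∑ k ∈ F, g k * f k ^ p :=
        mul_le_mul_of_nonneg_right
          (Real.rpow_le_rpow (Finset.sum_nonneg fun k _ => hg0 k) hS (by linarith))
          (Finset.sum_nonneg fun k _ => mul_nonneg (hg0 k) (Real.rpow_nonneg (hf0 k) _))
    _ = _ := by simp only [hterm]

/- Schur's test: the kernel sum is controlled by `(1-|z|²)^{-γ}`, and this loss is absorbed by
passing from the weight `α` to the weight `α - γ(p-1)`. -/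
lemma exists_norm_sum_testFun_rpow_le (n : ℕ) [NeZero n] (hp : 1 ≤ p) (hε : 0 < ε) (hγ : 0 < γ)
    (hb : n + γ < b) : ∃ C > (0 : ℝ), ∀ a : ℕ → En n, IsSeparated a ε →
      ∀ (F : Finset ℕ) (c : ℕ → ℂ) (θ : ℝ) (z : En n), ‖z‖ < 1 →
        ‖∑ k ∈ F, c k * testFun b θ (a k) z‖ ^ p ≤ C * (1 - ‖z‖ ^ 2) ^ (-(γ * (p - 1))) *
          ∑ k ∈ F, ‖c k‖ ^ p * (1 - ‖a k‖ ^ 2) ^ (b - γ + (γ - θ) * p) *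
            ‖1 - ⟪a k, z⟫_ℂ‖ ^ (-(b : ℝ)) := by
  obtain ⟨C, hC, hsum⟩ := exists_sum_mul_norm_one_sub_inner_rpow_le n hε hγ
    (t := b - γ - n - 1) (by linarith)
  refine ⟨C ^ (p - 1), by positivity, fun a ha F c θ z hz => ?_⟩
  have hz0 := one_sub_norm_sq_pos hz
  have hS := hsum a ha F z hz
  simp only [show (n : ℝ) + 1 + (b - γ - n - 1) = b - γ by ring, sub_add_cancel,
    norm_one_sub_inner_comm z] at hS
  have h := norm_sum_testFun_rpow_le (θ := θ) (norm_lt_one_of_isSeparated ha) hp hS c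
  rwa [Real.mul_rpow hC.le (by positivity), ← Real.rpow_mul hz0.le, neg_mul] at h

lemma exists_lintegral_rpow_mul_sum_norm_rpow_le (n : ℕ) [NeZero n] {t : ℝ} (hα : -1 < α)
    (ht : -1 < t) (hb : n + 1 + t < b) :
    ∃ C > (0 : ℝ), ∀ a : ℕ → En n, (∀ k, ‖a k‖ < 1) → ∀ (F : Finset ℕ) (A : ℕ → ℝ),
      (∀ k, 0 ≤ A k) → ∫⁻ z, ENNReal.ofReal ((1 - ‖z‖ ^ 2) ^ (t - α) *
          ∑ k ∈ F, A k * ‖1 - ⟪a k, z⟫_ℂ‖ ^ (-(b : ℝ))) ∂wMeas n α ≤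
        ENNReal.ofReal (C * ∑ k ∈ F, A k * (1 - ‖a k‖ ^ 2) ^ (-(b - (n + 1 + t)))) := by
  obtain ⟨C, hC, hFR⟩ := exists_lintegral_norm_one_sub_inner_rpow_le n ht (sub_pos.mpr hb)
  rw [add_sub_cancel] at hFR
  set V := volConst n α / volConst n t
  have hV : 0 < V := div_pos (volConst_pos n hα) (volConst_pos n ht)
  refine ⟨V * C, by positivity, fun a ha F A hA => ?_⟩
  have hρ (k) := one_sub_norm_sq_pos (ha k)
  calc _ = ∫⁻ z, ENNReal.ofReal ((1 - ‖z‖ ^ 2) ^ (t - α)) * ∑ k ∈ F, ENNReal.ofReal (A k) *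
          ENNReal.ofReal (‖1 - ⟪a k, z⟫_ℂ‖ ^ (-(b : ℝ))) ∂wMeas n α := by
        refine lintegral_congr_ae ((ae_wMeas_mem_unitBall n α).mono fun z hz => ?_)
        have hz0 := one_sub_norm_sq_pos (mem_ball_zero_iff.mp hz)
        simp_rw [← ENNReal.ofReal_mul (hA _)]
        rw [← ENNReal.ofReal_sum_of_nonneg fun k _ => mul_nonneg (hA k) (by positivity),
          ← ENNReal.ofReal_mul (by positivity)]
    _ = ENNReal.ofReal V * ∑ k ∈ F, ENNReal.ofReal (A k) *
          ∫⁻ z, ENNReal.ofReal (‖1 - ⟪a k, z⟫_ℂ‖ ^ (-(b : ℝ))) ∂wMeas n t := by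
        rw [lintegral_rpow_sub_mul_wMeas n hα ht (by fun_prop),
          lintegral_finsetSum _ fun k _ => by fun_prop]
        simp only [lintegral_const_mul' _ _ ENNReal.ofReal_ne_top, V]
    _ ≤ ENNReal.ofReal V * ∑ k ∈ F, ENNReal.ofReal (A k) *
          ENNReal.ofReal (C * (1 - ‖a k‖ ^ 2) ^ (-(b - (n + 1 + t)))) := by
        gcongr with k
        exact hFR (a k) (ha k)
    _ = _ := by
        simp_rw [← ENNReal.ofReal_mul (hA _)]
        rw [← ENNReal.ofReal_sum_of_nonneg fun k _ => mul_nonneg (hA k)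
            (by have := hρ k; positivity), ← ENNReal.ofReal_mul hV.le, mul_assoc]
        simp only [mul_left_comm _ C, ← Finset.mul_sum]

lemma exists_lintegral_sum_testFun_le (n : ℕ) [NeZero n] (hp : 1 ≤ p) (hε : 0 < ε) (hα : -1 < α)
    (hγ : 0 < γ) (ht : -1 < α - γ * (p - 1)) (hb : n + γ < b)
    (hb' : n + 1 + (α - γ * (p - 1)) < b) :
    ∃ C > (0 : ℝ), ∀ a : ℕ → En n, IsSeparated a ε → ∀ (F : Finset ℕ) (c : ℕ → ℂ),
      ∫⁻ z, ‖∑ k ∈ F, c k * testFun b ((n + 1 + α) / p) (a k) z‖ₑ ^ p ∂wMeas n α ≤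
        ENNReal.ofReal (C * ∑ k ∈ F, ‖c k‖ ^ p) := by
  have hp0 : 0 < p := by linarith
  set t := α - γ * (p - 1)
  obtain ⟨C₁, hC₁, hpoint⟩ := exists_norm_sum_testFun_rpow_le n hp hε hγ hb
  obtain ⟨C₂, hC₂, hint⟩ := exists_lintegral_rpow_mul_sum_norm_rpow_le n hα ht hb'
  have hexp : b - γ + (γ - (n + 1 + α) / p) * p = b - (n + 1 + t) := by
    rw [sub_mul, div_mul_cancel₀ _ hp0.ne']
    ring
  simp only [show -(γ * (p - 1)) = t - α by ring, mul_assoc C₁] at hpoint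
  refine ⟨C₁ * C₂, by positivity, fun a ha F c => ?_⟩
  have hρ (k) := one_sub_norm_sq_pos (norm_lt_one_of_isSeparated ha k)
  set A : ℕ → ℝ := fun k => ‖c k‖ ^ p * (1 - ‖a k‖ ^ 2) ^ (b - (n + 1 + t))
  have hA (k) : 0 ≤ A k := by have := hρ k; positivity
  calc ∫⁻ z, ‖∑ k ∈ F, c k * testFun b ((n + 1 + α) / p) (a k) z‖ₑ ^ p ∂wMeas n α
      ≤ ∫⁻ z, ENNReal.ofReal C₁ * ENNReal.ofReal ((1 - ‖z‖ ^ 2) ^ (t - α) *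
          ∑ k ∈ F, A k * ‖1 - ⟪a k, z⟫_ℂ‖ ^ (-(b : ℝ))) ∂wMeas n α := by
        refine lintegral_mono_ae ((ae_wMeas_mem_unitBall n α).mono fun z hz => ?_)
        rw [← ENNReal.ofReal_mul hC₁.le, ← ofReal_norm,
          ENNReal.ofReal_rpow_of_nonneg (norm_nonneg _) hp0.le]
        refine ENNReal.ofReal_le_ofReal ?_
        simpa only [hexp] using
          hpoint a ha F c ((n + 1 + α) / p) z (mem_ball_zero_iff.mp hz)
    _ ≤ ENNReal.ofReal C₁ *
          ENNReal.ofReal (C₂ * ∑ k ∈ F, A k * (1 - ‖a k‖ ^ 2) ^ (-(b - (n + 1 + t)))) := by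
        rw [lintegral_const_mul' _ _ ENNReal.ofReal_ne_top]
        gcongr
        exact hint a (norm_lt_one_of_isSeparated ha) F A hA
    _ = _ := by
        have hcancel (k) : A k * (1 - ‖a k‖ ^ 2) ^ (-(b - (n + 1 + t))) = ‖c k‖ ^ p := by
          rw [mul_assoc, ← Real.rpow_add (hρ k), add_neg_cancel, Real.rpow_zero, mul_one]
        simp only [hcancel, ← ENNReal.ofReal_mul hC₁.le, mul_assoc]

lemma norm_sum_smul_toLp {ι Ω : Type*} [MeasurableSpace Ω] {μ : Measure Ω} {P : ℝ≥0∞}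
    {f : ι → Ω → ℂ} (hf : ∀ k, MemLp (f k) P μ) (F : Finset ι) (c : ι → ℂ) :
    ‖∑ k ∈ F, c k • (hf k).toLp (f k)‖ =
      (eLpNorm (fun z => ∑ k ∈ F, c k * f k z) P μ).toReal := by
  have hsmul (k) : ((c k • (hf k).toLp (f k) : Lp ℂ P μ) : Ω → ℂ) =ᵐ[μ] fun z => c k * f k z := by
    filter_upwards [Lp.coeFn_smul (c k) ((hf k).toLp (f k)), (hf k).coeFn_toLp] with z hz1 hz2
    rw [hz1, Pi.smul_apply, hz2, smul_eq_mul]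
  rw [Lp.norm_def]
  congr 1
  refine eLpNorm_congr_ae ?_
  filter_upwards [Lp.coeFn_finsetSum F fun k => c k • (hf k).toLp (f k),
    (Finset.eventually_all F).mpr fun k _ => hsmul k] with z hz1 hz2
  rw [hz1, Finset.sum_apply]
  exact Finset.sum_congr rfl hz2

lemma exists_eLpNorm_sum_testFun_le (n : ℕ) [NeZero n] (hp : 1 ≤ p) (hε : 0 < ε) (hα : -1 < α) :
    ∃ b : ℕ, ∃ C > (0 : ℝ), ∀ a : ℕ → En n, IsSeparated a ε → ∀ (F : Finset ℕ) (c : ℕ → ℂ),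
      eLpNorm (fun z => ∑ k ∈ F, c k * testFun b ((n + 1 + α) / p) (a k) z) (ENNReal.ofReal p)
        (wMeas n α) ≤ ENNReal.ofReal (C * (∑ k ∈ F, ‖c k‖ ^ p) ^ (1 / p)) := by
  have hp0 : 0 < p := by linarith
  set γ := (α + 1) / (2 * p)
  have hγ : 0 < γ := div_pos (by linarith) (by linarith)
  have hγp : γ * (2 * p) = α + 1 := div_mul_cancel₀ _ (by positivity)
  obtain ⟨b, hb⟩ := exists_nat_gt (n + 1 + |α| + γ)
  obtain ⟨C, hC, h⟩ := exists_lintegral_sum_testFun_le n hp hε hα hγ (b := b) (by nlinarith)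
    (by linarith [abs_nonneg α]) (by nlinarith [le_abs_self α])
  refine ⟨b, C ^ (1 / p), by positivity, fun a ha F c => ?_⟩
  rw [eLpNorm_eq_lintegral_rpow_enorm_toReal (ENNReal.ofReal_pos.mpr hp0).ne'
    ENNReal.ofReal_ne_top, ENNReal.toReal_ofReal hp0.le, ← Real.mul_rpow hC.le (by positivity),
    ← ENNReal.ofReal_rpow_of_nonneg (by positivity) (by positivity)]
  exact ENNReal.rpow_le_rpow (h a ha F c) (by positivity)

lemma exists_testFamily (n : ℕ) [NeZero n] (hp : 1 ≤ p) (hε : 0 < ε) (hα : -1 < α) (δ : ℝ)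
    [Fact (1 ≤ ENNReal.ofReal p)] :
    ∃ K > (0 : ℝ), ∀ a : ℕ → En n, IsSeparated a ε →
      ∃ (G : ℕ → BergmanSpace n p α) (h : ℕ → En n → ℂ), HasUpperEstimate p K G ∧
        ∀ k, DifferentiableOn ℂ (h k) (unitBall n) ∧
          ((G k : Lp ℂ (ENNReal.ofReal p) (wMeas n α)) : En n → ℂ) =ᵐ[wMeas n α] h k ∧
          ∀ z ∈ bergmanBall (a k) δ, (1 - ‖a k‖ ^ 2) ^ (-((n + 1 + α) / p)) ≤ K * ‖h k z‖ := by
  obtain ⟨b, C, hC, hnorm⟩ := exists_eLpNorm_sum_testFun_le n hp hε hα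
  set θ := (n + 1 + α) / p
  refine ⟨max (Real.exp (2 * δ) ^ b) C, by positivity, fun a ha => ?_⟩
  have hak := norm_lt_one_of_isSeparated ha
  have hmem (k) : MemLp (testFun b θ (a k)) (ENNReal.ofReal p) (wMeas n α) := by
    refine ⟨(measurable_testFun b θ (a k)).aestronglyMeasurable, ?_⟩
    simpa using (hnorm a ha {k} fun _ => 1).trans_lt ENNReal.ofReal_lt_top
  refine ⟨fun k => ⟨(hmem k).toLp _, testFun b θ (a k), differentiableOn_testFun b θ (hak k),
    (hmem k).coeFn_toLp⟩, fun k => testFun b θ (a k), fun F c => ?_, fun k =>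
    ⟨differentiableOn_testFun b θ (hak k), (hmem k).coeFn_toLp, fun z hz => ?_⟩⟩
  · rw [Submodule.coe_norm, Submodule.coe_sum]
    refine (norm_sum_smul_toLp hmem F c).trans_le ((ENNReal.toReal_le_of_le_ofReal (by positivity)
      (hnorm a ha F c)).trans ?_)
    gcongr
    exact le_max_right _ _
  · refine (rpow_neg_le_norm_testFun_of_mem_bergmanBall b θ (hak k) hz).trans ?_
    gcongr
    exact le_max_left _ _

end TestFunctions

section CarlesonEmbedding

open scoped Classical in
lemma sum_mul_measure_le {Ω ι : Type*} [MeasurableSpace Ω] {μ : Measure Ω} {B : ι → Set Ω}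
    {F : Finset ι} {ρ : ι → ℝ≥0∞} {g : Ω → ℝ≥0∞} {N : ℝ≥0∞} (hN : N ≠ ∞)
    (hB : ∀ k, MeasurableSet (B k)) (hover : ∀ z, ({k ∈ F | z ∈ B k}.card : ℝ≥0∞) ≤ N)
    (hg : ∀ k ∈ F, ∀ z ∈ B k, ρ k ≤ g z) :
    ∑ k ∈ F, ρ k * μ (B k) ≤ N * ∫⁻ z, g z ∂μ := by
  calc ∑ k ∈ F, ρ k * μ (B k) = ∫⁻ z, ∑ k ∈ F, (B k).indicator (fun _ => ρ k) z ∂μ := by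
        rw [lintegral_finsetSum _ fun k _ => measurable_const.indicator (hB k)]
        simp only [lintegral_indicator_const (hB _)]
    _ ≤ ∫⁻ z, N * g z ∂μ := by
        refine lintegral_mono fun z => ?_
        simp only [Set.indicator_apply]
        rw [← Finset.sum_filter]
        refine (Finset.sum_le_card_nsmul _ _ (g z) fun k hk => ?_).trans ?_
        · exact hg k (Finset.mem_filter.mp hk).1 z (Finset.mem_filter.mp hk).2
        · rw [nsmul_eq_mul]
          gcongr
          exact hover z
    _ = N * ∫⁻ z, g z ∂μ := lintegral_const_mul' _ _ hN

variable {n : ℕ} {p q r α δ ε K : ℝ} {μ : Measure (En n)} {a : ℕ → En n}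

lemma mul_carlesonBeta_rpow (hq : 0 < q) (w : ℝ≥0) (k : ℕ) :
    (w * carlesonBeta n p q α δ μ a k) ^ q =
      ENNReal.ofReal (w * (1 - ‖a k‖ ^ 2) ^ (-((n + 1 + α) / p))) ^ q *
        μ (bergmanBall (a k) δ) := by
  rw [carlesonBeta, ← mul_assoc, ENNReal.mul_rpow_of_nonneg _ _ hq.le, ← ENNReal.rpow_mul,
    one_div_mul_cancel hq.ne', ENNReal.rpow_one, ENNReal.ofReal_mul w.coe_nonneg,
    ENNReal.ofReal_coe_nnreal]

open scoped Classical in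
lemma sum_mul_carlesonBeta_rpow_le {N : ℝ} (hq : 0 < q) (hδ : 0 ≤ δ) (hK : 0 ≤ K)
    (ha : ∀ k, ‖a k‖ < 1) {F : Finset ℕ}
    (hover : ∀ z, ({k ∈ F | z ∈ bergmanBall (a k) δ}.card : ℝ) ≤ N) {w : ℕ → ℝ≥0}
    {h : ℕ → En n → ℂ} (hh : ∀ k, ∀ z ∈ bergmanBall (a k) δ,
      w k * (1 - ‖a k‖ ^ 2) ^ (-((n + 1 + α) / p)) ≤ K * ‖h k z‖) :
    ∑ k ∈ F, (w k * carlesonBeta n p q α δ μ a k) ^ q ≤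
      ENNReal.ofReal (N * K ^ q) * ∫⁻ z, ENNReal.ofReal ((∑ k ∈ F, ‖h k z‖ ^ 2) ^ (q / 2)) ∂μ := by
  have hN : 0 ≤ N := (Nat.cast_nonneg _).trans (hover 0)
  simp only [mul_carlesonBeta_rpow hq]
  rw [ENNReal.ofReal_mul hN, mul_assoc, ← lintegral_const_mul' _ _ ENNReal.ofReal_ne_top]
  refine sum_mul_measure_le ENNReal.ofReal_ne_top
    (fun k => (isOpen_bergmanBall (ha k) hδ).measurableSet) (fun z => ?_) fun k hk z hz => ?_
  · simpa only [ENNReal.ofReal_natCast] using ENNReal.ofReal_le_ofReal (hover z)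
  · have hsingle : ‖h k z‖ ^ q ≤ (∑ k ∈ F, ‖h k z‖ ^ 2) ^ (q / 2) := by
      rw [← mul_div_cancel₀ q two_ne_zero, Real.rpow_mul (norm_nonneg _), Real.rpow_two,
        mul_div_cancel₀ q two_ne_zero]
      gcongr
      exact Finset.single_le_sum (f := fun k => ‖h k z‖ ^ 2) (fun k _ => by positivity) hk
    have hρ := one_sub_norm_sq_pos (ha k)
    rw [ENNReal.ofReal_rpow_of_nonneg (by positivity) hq.le, ← ENNReal.ofReal_mul (by positivity)]
    refine ENNReal.ofReal_le_ofReal ?_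
    calc _ ≤ (K * ‖h k z‖) ^ q :=
          Real.rpow_le_rpow (by positivity) (hh k z hz) hq.le
      _ ≤ K ^ q * (∑ k ∈ F, ‖h k z‖ ^ 2) ^ (q / 2) := by
          rw [Real.mul_rpow hK (norm_nonneg _)]
          gcongr

lemma carlesonBeta_le_norm [Fact (1 ≤ ENNReal.ofReal q)] (hq : 0 < q) (hδ : 0 ≤ δ) (hK : 0 ≤ K)
    {k : ℕ} (ha : ‖a k‖ < 1) {h : En n → ℂ}
    (hh : ∀ z ∈ bergmanBall (a k) δ, (1 - ‖a k‖ ^ 2) ^ (-((n + 1 + α) / p)) ≤ K * ‖h z‖)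
    {f : Lp ℂ (ENNReal.ofReal q) μ} (hf : f =ᵐ[μ] h) :
    carlesonBeta n p q α δ μ a k ≤ ENNReal.ofReal (K * ‖f‖) := by
  have hmeas := (isOpen_bergmanBall ha hδ).measurableSet
  have hβ := mul_carlesonBeta_rpow (p := p) (α := α) (δ := δ) (μ := μ) (a := a) hq 1 k
  simp only [ENNReal.coe_one, NNReal.coe_one, one_mul] at hβ
  rw [← ENNReal.rpow_le_rpow_iff hq, hβ, ← setLIntegral_const]
  calc _ ≤ ∫⁻ z in bergmanBall (a k) δ, ENNReal.ofReal K ^ q * ‖f z‖ₑ ^ q ∂μ := by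
        refine setLIntegral_mono_ae' hmeas (hf.mono fun z hz hzB => ?_)
        rw [hz, ← ENNReal.mul_rpow_of_nonneg _ _ hq.le, ← ofReal_norm, ← ENNReal.ofReal_mul hK]
        gcongr
        exact hh z hzB
    _ ≤ ∫⁻ z, ENNReal.ofReal K ^ q * ‖f z‖ₑ ^ q ∂μ := setLIntegral_le_lintegral _ _
    _ = ENNReal.ofReal (K * ‖f‖) ^ q := by
        rw [lintegral_const_mul' _ _ (by finiteness), lintegral_enorm_rpow_eq_norm_rpow hq,
          ← ENNReal.ofReal_rpow_of_nonneg (norm_nonneg f) hq.le,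
          ← ENNReal.mul_rpow_of_nonneg _ _ hq.le, ← ENNReal.ofReal_mul hK]

lemma SummingIneq.exists_sum_mul_carlesonBeta_rpow_le (n : ℕ) [NeZero n] (p α : ℝ) (hq : 1 ≤ q)
    (hr : 0 < r) (hδ : 0 ≤ δ) (hε : 0 < ε) [Fact (1 ≤ ENNReal.ofReal q)] :
    ∃ D > (0 : ℝ), ∀ {X : Type*} [NormedAddCommGroup X] [NormedSpace ℂ X] {μ : Measure (En n)}
      {T : X →ₗ[ℂ] Lp ℂ (ENNReal.ofReal q) μ} {a : ℕ → En n} {G : ℕ → X} {h : ℕ → En n → ℂ}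
      {K M C : ℝ}, 0 ≤ K → 0 ≤ M → 0 ≤ C → SummingIneq r T C → IsSeparated a ε →
      (∀ k, T (G k) =ᵐ[μ] h k) →
      (∀ k, ∀ z ∈ bergmanBall (a k) δ, (1 - ‖a k‖ ^ 2) ^ (-((n + 1 + α) / p)) ≤ K * ‖h k z‖) →
      ∀ (F : Finset ℕ) (l : ℕ → ℝ≥0), WeakSumLE 2 F (fun k => ((l k : ℝ) : ℂ) • G k) M →
        ∑ k ∈ F, (l k * carlesonBeta n p q α δ μ a k) ^ q ≤
          ENNReal.ofReal (D * K * (C * M)) ^ q := by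
  have hq0 : 0 < q := by linarith
  obtain ⟨N, hN, hover⟩ := exists_card_bergmanBall_le n hε δ
  obtain ⟨D, hD, hsq⟩ := SummingIneq.exists_lintegral_squareFunction_le hq hr
  refine ⟨N ^ (1 / q) * D, by positivity, ?_⟩
  intro X _ _ μ T a G h K M C hK hM hC hT ha hG hh F l hl
  have hlG (k : F) : T (((l k : ℝ) : ℂ) • G k) =ᵐ[μ] fun z => ((l k : ℝ) : ℂ) * h k z := by
    rw [map_smul]
    filter_upwards [Lp.coeFn_smul ((l k : ℝ) : ℂ) (T (G k)), hG k] with z hz1 hz2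
    rw [hz1, Pi.smul_apply, hz2, smul_eq_mul]
  have hint := hsq hC hM hT hlG hl.subtype
  have hcoe (z) := F.sum_coe_sort fun k => ‖((l k : ℝ) : ℂ) * h k z‖ ^ 2
  simp only [hcoe] at hint
  have hlh (k z) (hz : z ∈ bergmanBall (a k) δ) :
      l k * (1 - ‖a k‖ ^ 2) ^ (-((n + 1 + α) / p)) ≤ K * ‖((l k : ℝ) : ℂ) * h k z‖ := by
    rw [norm_mul, Complex.norm_real, Real.norm_of_nonneg (l k).coe_nonneg, mul_left_comm]
    gcongr
    exact hh k z hz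
  calc _ ≤ _ := sum_mul_carlesonBeta_rpow_le hq0 hδ hK (norm_lt_one_of_isSeparated ha)
        (hover a ha F) hlh
    _ ≤ ENNReal.ofReal (N * K ^ q) * ENNReal.ofReal ((D * (C * M)) ^ q) := by gcongr
    _ = _ := by
        rw [← ENNReal.ofReal_mul (by positivity), ENNReal.ofReal_rpow_of_nonneg (by positivity)
          hq0.le, mul_assoc N, ← Real.mul_rpow hK (by positivity)]
        rw [show N ^ (1 / q) * D * K * (C * M) = N ^ (1 / q) * (K * (D * (C * M))) by ring,
          Real.mul_rpow (x := N ^ (1 / q)) (by positivity) (by positivity), ← Real.rpow_mul hN.le,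
          one_div_mul_cancel hq0.ne', Real.rpow_one]

lemma exists_testFamily_carlesonBeta (n : ℕ) [NeZero n] (hα : -1 < α) (hp : 1 ≤ p) (hq : 1 ≤ q)
    (hr : 0 < r) (hδ : 0 ≤ δ) (hε : 0 < ε) [Fact (1 ≤ ENNReal.ofReal p)]
    [Fact (1 ≤ ENNReal.ofReal q)] :
    ∃ K > (0 : ℝ), ∀ a : ℕ → En n, IsSeparated a ε →
      ∃ G : ℕ → BergmanSpace n p α, HasUpperEstimate p K G ∧
        ∀ (μ : Measure (En n)) (J : BergmanSpace n p α →ₗ[ℂ] Lp ℂ (ENNReal.ofReal q) μ),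
          RepresentsEmbedding n p q α μ J →
          (∀ k, carlesonBeta n p q α δ μ a k ≤ ENNReal.ofReal (K * ‖J (G k)‖)) ∧
          ∀ C, 0 ≤ C → SummingIneq r J C → ∀ (F : Finset ℕ) (l : ℕ → ℝ≥0),
            WeakSumLE 2 F (fun k => ((l k : ℝ) : ℂ) • G k) K →
              ∑ k ∈ F, (l k * carlesonBeta n p q α δ μ a k) ^ q ≤
                ENNReal.ofReal (K ^ 2 * C) ^ q := by
  obtain ⟨K₀, hK₀, htest⟩ := exists_testFamily n hp hε hα δ
  obtain ⟨D, _, hsum⟩ := SummingIneq.exists_sum_mul_carlesonBeta_rpow_le n p α hq hr hδ hε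
  refine ⟨max K₀ (D * K₀), by positivity, fun a ha => ?_⟩
  set K := max K₀ (D * K₀)
  have hK : 0 ≤ K := by positivity
  obtain ⟨G, h, hG, hGh⟩ := htest a ha
  refine ⟨G, hG.mono (le_max_left _ _), fun μ J hJ => ?_⟩
  have hJG (k) : J (G k) =ᵐ[μ] h k := hJ _ _ (hGh k).1 (hGh k).2.1
  refine ⟨fun k => ?_, fun C hC hT F l hl => ?_⟩
  · refine (carlesonBeta_le_norm (by linarith) hδ hK₀.le (norm_lt_one_of_isSeparated ha k)
      (hGh k).2.2 (hJG k)).trans ?_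
    gcongr
    exact le_max_left _ _
  · refine (hsum hK₀.le hK hC hT ha hJG (fun k => (hGh k).2.2) F l hl).trans ?_
    rw [show K ^ 2 * C = K * (C * K) by ring]
    gcongr
    exact le_max_right _ _

end CarlesonEmbedding

section Conclusion

lemma ellNormE'_le {s : ℝ} (hs : 0 < s) {b : ℕ → ℝ≥0∞} {A : ℝ≥0∞}
    (h : ∀ F : Finset ℕ, ∑ k ∈ F, b k ^ s ≤ A ^ s) : ellNormE' s b ≤ A := by
  rw [ellNormE', one_div, ENNReal.rpow_inv_le_iff hs, ENNReal.tsum_eq_iSup_sum]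
  exact iSup_le h

variable {X Y ι : Type*} [NormedAddCommGroup X] [NormedSpace ℂ X] [NormedAddCommGroup Y]
  {p q r s K : ℝ}

lemma IsSummingRS.le_ofReal_mul_summingNorm {D : ℝ} {T : X → Y} (hT : IsSummingRS r s T)
    (hD : 0 < D) {u : ℝ≥0∞}
    (h : ∀ C, 0 ≤ C → SummingBoundWith r s T C → u ≤ ENNReal.ofReal (D * C)) :
    u ≤ ENNReal.ofReal (D * summingNorm r s T) := by
  obtain ⟨C₀, hC₀, hT₀⟩ := hT
  lift u to ℝ≥0 using ne_top_of_le_ne_top ENNReal.ofReal_ne_top (h C₀ hC₀ hT₀)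
  rw [← ENNReal.ofReal_coe_nnreal]
  refine ENNReal.ofReal_le_ofReal ?_
  rw [← div_le_iff₀' hD]
  refine le_csInf ⟨C₀, hC₀, hT₀⟩ fun C ⟨hC, hTC⟩ => ?_
  rw [div_le_iff₀' hD, ← ENNReal.ofReal_le_ofReal_iff (by positivity), ENNReal.ofReal_coe_nnreal]
  exact h C hC hTC

namespace HasUpperEstimate

lemma sum_rpow_le_of_summingIneq {ι : Type} {G : ι → X} {b : ι → ℝ≥0∞} {T : X → Y} {C : ℝ}
    (hG : HasUpperEstimate p K G) (hp : 1 < p) (hs : p / (p - 1) ≤ s) (hK : 0 ≤ K) (hC : 0 ≤ C)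
    (hT : SummingIneq s T C) (hb : ∀ k, b k ≤ ENNReal.ofReal (K * ‖T (G k)‖)) (F : Finset ι) :
    ∑ k ∈ F, b k ^ s ≤ ENNReal.ofReal (K ^ 2 * C) ^ s := by
  have hs0 : 0 < s := (div_pos (by linarith) (by linarith)).trans_le hs
  have h := hT ι F G K hK (hG.weakSumLE hp hs hK F)
  calc ∑ k ∈ F, b k ^ s ≤ ∑ k ∈ F, ENNReal.ofReal (K * ‖T (G k)‖) ^ s := by
        gcongr with k
        exact hb k
    _ = ENNReal.ofReal (K ^ s * ∑ k ∈ F, ‖T (G k)‖ ^ s) := by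
        simp only [ENNReal.ofReal_rpow_of_nonneg (mul_nonneg hK (norm_nonneg _)) hs0.le,
          Real.mul_rpow hK (norm_nonneg _)]
        rw [← ENNReal.ofReal_sum_of_nonneg fun k _ => by positivity, Finset.mul_sum]
    _ ≤ ENNReal.ofReal (K ^ s * (C * K) ^ s) := by gcongr
    _ = ENNReal.ofReal (K ^ 2 * C) ^ s := by
        rw [← Real.mul_rpow hK (by positivity),
          ENNReal.ofReal_rpow_of_nonneg (by positivity) hs0.le]
        ring_nf

variable {G : ι → X} {b : ι → ℝ≥0∞} {A : ℝ≥0} (hb : ∀ (F : Finset ι) (l : ι → ℝ≥0),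
  WeakSumLE 2 F (fun k => ((l k : ℝ) : ℂ) • G k) K → ∑ k ∈ F, (l k * b k) ^ q ≤ (A : ℝ≥0∞) ^ q)

include hb

lemma sum_rpow_le_of_two_le (hG : HasUpperEstimate p K G) (hp : 2 ≤ p) (hK : 0 ≤ K)
    (F : Finset ι) : ∑ k ∈ F, b k ^ q ≤ (A : ℝ≥0∞) ^ q := by
  have hp' : p / (p - 1) ≤ 2 := by
    rw [div_le_iff₀ (by linarith)]
    linarith
  simpa using hb F 1 (by simpa using hG.weakSumLE (by linarith) hp' hK F)

lemma le_of_weakSumLE_two (hG : HasUpperEstimate p K G) (hq : 0 < q) (k : ι) :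
    b k ≤ A := by
  have h := hb {k} 1 fun φ hφ => by
    simpa using pow_le_pow_left₀ (norm_nonneg _) (hG.norm_apply_le hφ k) 2
  simpa [ENNReal.rpow_le_rpow_iff hq] using h

lemma sum_rpow_le_of_lt_two (hG : HasUpperEstimate p K G) (hp : 1 ≤ p) (hp2 : p < 2) (hq : 0 < q)
    (hpq : 0 < 2 * p - 2 * q + p * q) (hK : 0 ≤ K) (F : Finset ι) :
    ∑ k ∈ F, b k ^ (2 * p * q / (2 * p - 2 * q + p * q)) ≤
      (A : ℝ≥0∞) ^ (2 * p * q / (2 * p - 2 * q + p * q)) := by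
  have : 0 < p := by linarith
  have : 0 < 2 - p := by linarith
  have hA (k) : b k ≤ A := hG.le_of_weakSumLE_two hb hq k
  refine sum_rpow_le_of_forall_weight hq (s := 2 * p / (2 - p)) (by positivity) (by positivity)
    (by field_simp; ring) (fun k => ne_top_of_le_ne_top ENNReal.coe_ne_top (hA k))
    fun l hl => hb F l (hG.weakSumLE_two_smul hp hp2 hK (fun k => (l k).coe_nonneg) ?_)
  exact_mod_cast hl

end HasUpperEstimate

end Conclusion

theorem statement9_general (n : ℕ) [NeZero n] {p q r α δ ε : ℝ} (hα : -1 < α) (hp : 1 ≤ p)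
    (hq : 1 ≤ q) (hr : 0 < r) (hδ : 0 < δ) (hε : 0 < ε) [Fact (1 ≤ ENNReal.ofReal p)]
    [Fact (1 ≤ ENNReal.ofReal q)] :
    ∃ C > (0 : ℝ), ∀ a : ℕ → En n, IsSeparated a ε →
      ∀ μ : Measure (En n), μ (unitBall n)ᶜ = 0 →
      ∀ J : BergmanSpace n p α →ₗ[ℂ] Lp ℂ (ENNReal.ofReal q) μ,
      RepresentsEmbedding n p q α μ J → IsSummingRS r r J →
      (p ≤ 2 → 0 < 2 * p - 2 * q + p * q →
        ellNormE' (2 * p * q / (2 * p - 2 * q + p * q)) (carlesonBeta n p q α δ μ a) ≤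
          ENNReal.ofReal (C * summingNorm r r J)) ∧
      (⨆ k, carlesonBeta n p q α δ μ a k) ≤ ENNReal.ofReal (C * summingNorm r r J) ∧
      (∀ s, 1 < p → p / (p - 1) ≤ s → r ≤ s →
        ellNormE' s (carlesonBeta n p q α δ μ a) ≤ ENNReal.ofReal (C * summingNorm r r J)) ∧
      (2 ≤ p → ellNormE' q (carlesonBeta n p q α δ μ a) ≤
        ENNReal.ofReal (C * summingNorm r r J)) := by
  have hq0 : 0 < q := by linarith
  obtain ⟨K, hK, hfam⟩ := exists_testFamily_carlesonBeta n hα hp hq hr hδ.le hε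
  refine ⟨K ^ 2, by positivity, fun a ha μ _ J hJ hsum => ?_⟩
  obtain ⟨G, hG, hGJ⟩ := hfam a ha
  obtain ⟨hβ, hweight⟩ := hGJ μ J hJ
  have hreduce (u : ℝ≥0∞)
      (h : ∀ C, 0 ≤ C → SummingIneq r J C → u ≤ ENNReal.ofReal (K ^ 2 * C)) :
      u ≤ ENNReal.ofReal (K ^ 2 * summingNorm r r J) :=
    hsum.le_ofReal_mul_summingNorm (by positivity) fun C hC hT => h C hC (hT.summingIneq hr hC)
  have htwo (hp2 : 2 ≤ p) : ellNormE' q (carlesonBeta n p q α δ μ a) ≤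
      ENNReal.ofReal (K ^ 2 * summingNorm r r J) := hreduce _ fun C hC hT =>
    ellNormE'_le hq0 (hG.sum_rpow_le_of_two_le (hweight C hC hT) hp2 hK.le)
  refine ⟨fun hp2 hpq => ?_, ?_, fun s hp1 hps hrs => ?_, htwo⟩
  · rcases hp2.eq_or_lt with rfl | hp2
    · rw [show 2 * 2 * q / (2 * 2 - 2 * q + 2 * q) = q by ring]
      exact htwo le_rfl
    · exact hreduce _ fun C hC hT => ellNormE'_le (by positivity)
        (hG.sum_rpow_le_of_lt_two (hweight C hC hT) hp hp2 hq0 hpq hK.le)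
  · exact hreduce _ fun C hC hT => iSup_le (hG.le_of_weakSumLE_two (hweight C hC hT) hq0)
  · exact hreduce _ fun C hC hT => ellNormE'_le (hr.trans_le hrs)
      (hG.sum_rpow_le_of_summingIneq hp1 hps hK.le hC (hT.mono_exponent hr hrs hC) hβ)

theorem statement9 (n : ℕ) (hn : 1 ≤ n) (p q r α δ ε : ℝ)
    (hα : -1 < α) (hp : 1 ≤ p) (hq : 1 ≤ q) (hr : 1 ≤ r) (hδ : 0 < δ) (hε : 0 < ε)
    [Fact (1 ≤ ENNReal.ofReal p)] [Fact (1 ≤ ENNReal.ofReal q)] :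
    ∃ C > (0 : ℝ), ∀ a : ℕ → En n, IsSeparated a ε →
      ∀ μ : Measure (En n), μ (unitBall n)ᶜ = 0 →
      ∀ J : BergmanSpace n p α →ₗ[ℂ] Lp ℂ (ENNReal.ofReal q) μ,
        RepresentsEmbedding n p q α μ ⇑J → IsSummingRS r r ⇑J →
        -- (1) the case 1 ≤ p,q ≤ 2
        (p ≤ 2 → q ≤ 2 → ¬(p = 1 ∧ q = 2) →
          ellNormE' (2 * p * q / (2 * p - 2 * q + p * q)) (carlesonBeta n p q α δ μ a) ≤
            ENNReal.ofReal (C * summingNorm r r ⇑J)) ∧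
        (p = 1 → q = 2 →
          (⨆ k, carlesonBeta n p q α δ μ a k) ≤
            ENNReal.ofReal (C * summingNorm r r ⇑J)) ∧
        -- (2) the case p > 1, 1 ≤ r ≤ p'
        (1 < p → r ≤ p / (p - 1) →
          ellNormE' (p / (p - 1)) (carlesonBeta n p q α δ μ a) ≤
            ENNReal.ofReal (C * summingNorm r r ⇑J)) ∧
        -- (3) the case p > 1, p' ≤ r
        (1 < p → p / (p - 1) ≤ r →
          ellNormE' r (carlesonBeta n p q α δ μ a) ≤
            ENNReal.ofReal (C * summingNorm r r ⇑J)) ∧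
        -- (4) the case p,q ≥ 2
        (2 ≤ p → 2 ≤ q →
          ellNormE' q (carlesonBeta n p q α δ μ a) ≤
            ENNReal.ofReal (C * summingNorm r r ⇑J)) := by
  have : NeZero n := ⟨by omega⟩
  obtain ⟨C, hC, h⟩ := statement9_general n hα hp hq (by linarith : 0 < r) hδ hε
  refine ⟨C, hC, fun a ha μ hμ J hJ hsum => ?_⟩
  obtain ⟨hle, hsup, hconj, hge⟩ := h a ha μ hμ J hJ hsum
  refine ⟨fun hp2 hq2 hpq => hle hp2 ?_, fun _ _ => hsup, fun hp1 hrp => hconj _ hp1 le_rfl hrp,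
    fun hp1 hpr => hconj r hp1 hpr le_rfl, fun hp2 _ => hge hp2⟩
  by_contra! hden
  exact hpq ⟨by nlinarith, by nlinarith⟩
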